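/- Let T be the diagonal maximal torus of SL_2 acting on the space V_n of binary forms of degree n over a field of characteristic 0. Then the cardinality of a minimal generating set of k[V_n]^T is O(n·e^{6√n log 2n}) for odd n, and O(n·e^{12√(n/2) log n}) for even n. -/

import Mathlib

open MvPolynomial

variable (k : Type) [Field k]

/-- The action of `t ∈ k* = 𝔾ₘ` on a polynomial ring in which the variable `x_i` has
weight `w i`: the substitution `x_i ↦ t^{w i} x_i`. -/
noncomputable def torusAct {ι : Type} (w : ι → ℤ) (t : kˣ) :
    MvPolynomial ι k →ₐ[k] MvPolynomial ι k :=
  aeval (fun i => ((t ^ w i : kˣ) : k) • X i)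

/-- The ring of invariants of the torus `k*` acting on a polynomial ring with the
variable `x_i` of weight `w i`. -/
noncomputable def torusInv {ι : Type} (w : ι → ℤ) : Subalgebra k (MvPolynomial ι k) where
  carrier := {p | ∀ t : kˣ, torusAct k w t p = p}
  mul_mem' := by intro a b ha hb t; rw [map_mul, ha t, hb t]
  add_mem' := by intro a b ha hb t; rw [map_add, ha t, hb t]
  algebraMap_mem' := by intro r t; exact (torusAct k w t).commutes r

/-- The minimal cardinality of a (finite) generating set of a subalgebra. -/
noncomputable def minGens {R : Type} [CommRing R] [Algebra k R] (A : Subalgebra k R) : ℕ :=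
  sInf {c : ℕ | ∃ S : Finset R, S.card = c ∧ Algebra.adjoin k (S : Set R) = A}

/-- The weight function for the variables `x_1, …, x_n, x_{-n}`: the variable `x_i`
(encoded `some i`) has weight `i + 1 ∈ {1, …, n}`, and `x_{-n}` (encoded `none`) has
weight `-n`. -/
def wOpt (n : ℕ) : Option (Fin n) → ℤ :=
  fun o => Option.elim o (-(n : ℤ)) (fun i => (i : ℤ) + 1)

/-- The weight function for the coordinates `a_i` of a binary form of degree `n` under
the diagonal maximal torus `T = {diag(t, t⁻¹)}` of `SL₂`: the `j`-th coordinate has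
weight `n - 2j`, so the weights range over `{-n, -n+2, …, n-2, n}`. -/
def wBin (n : ℕ) : Fin (n + 1) → ℤ := fun j => (n : ℤ) - 2 * j


section OlsonPart
variable {G : Type*} [AddCommGroup G] [DecidableEq G]

/-- number of `s ∈ D` with `s - x ∉ D`. -/
def lamF (D : Finset G) (x : G) : ℕ := (D.filter (fun s => s - x ∉ D)).card

lemma lamF_add (D : Finset G) (x y : G) : lamF D (x + y) ≤ lamF D x + lamF D y := by
  unfold lamF
  have h : D.filter (fun s => s - (x + y) ∉ D) ⊆
      D.filter (fun s => s - x ∉ D) ∪ (D.filter (fun s => s - y ∉ D)).image (fun s => s + x) := by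
    intro s hs
    simp only [Finset.mem_filter, Finset.mem_union, Finset.mem_image] at hs ⊢
    by_cases h1 : s - x ∈ D
    · right
      refine ⟨s - x, ⟨h1, ?_⟩, by abel⟩
      rw [sub_sub]; exact hs.2
    · left; exact ⟨hs.1, h1⟩
  calc _ ≤ _ := Finset.card_le_card h
    _ ≤ _ := Finset.card_union_le _ _
    _ ≤ _ := Nat.add_le_add_left Finset.card_image_le _

lemma lamF_add_card (D : Finset G) (x : G) :
    lamF D x + (D.filter (fun s => s - x ∈ D)).card = D.card := by
  unfold lamF
  rw [add_comm]
  exact Finset.card_filter_add_card_filter_not (s := D) (fun s => s - x ∈ D)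

lemma lamF_neg (D : Finset G) (x : G) : lamF D (-x) = lamF D x := by
  have h1 := lamF_add_card D x
  have h2 := lamF_add_card D (-x)
  have h3 : (D.filter (fun s => s - x ∈ D)).card = (D.filter (fun s => s - -x ∈ D)).card := by
    apply Finset.card_bij (fun s _ => s - x)
    · intro s hs; simp only [Finset.mem_filter] at hs ⊢; refine ⟨hs.2, ?_⟩; simpa using hs.1
    · intro a _ b _ h; simpa using h
    · intro b hb; simp only [Finset.mem_filter] at hb
      refine ⟨b + x, ?_, by abel⟩
      simp only [Finset.mem_filter]; refine ⟨by simpa using hb.2, by simpa using hb.1⟩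
  omega

lemma lamF_zero (D : Finset G) : lamF D 0 = 0 := by
  unfold lamF; simp

lemma lamF_compl [Fintype G] (D : Finset G) (x : G) : lamF Dᶜ x = lamF D x := by
  rw [← lamF_neg D]
  unfold lamF
  apply Finset.card_bij (fun s _ => s - x)
  · intro s hs; simp only [Finset.mem_filter, Finset.mem_compl, not_not] at hs ⊢
    refine ⟨hs.2, ?_⟩; simpa using hs.1
  · intro a _ b _ h; simpa using h
  · intro b hb; simp only [Finset.mem_filter] at hb
    refine ⟨b + x, ?_, by abel⟩
    simp only [Finset.mem_filter, Finset.mem_compl, not_not]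
    refine ⟨by simpa using hb.2, by simpa using hb.1⟩

/-- averaging: if all elements of `C` have small `lamF`, `C` is small. -/
lemma lamF_sum (D C : Finset G) : C.card * D.card ≤ ∑ c ∈ C, lamF D c + D.card ^ 2 := by
  have h1 : ∑ c ∈ C, (D.filter (fun s => s - c ∈ D)).card ≤ D.card ^ 2 := by
    have : ∀ c ∈ C, (D.filter (fun s => s - c ∈ D)).card
        = ∑ s ∈ D, if s - c ∈ D then 1 else 0 := by
      intro c _; rw [Finset.card_filter]
    rw [Finset.sum_congr rfl this, Finset.sum_comm, pow_two, ← smul_eq_mul]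
    apply Finset.sum_le_card_nsmul
    intro s _
    rw [← Finset.card_filter]
    apply Finset.card_le_card_of_injOn (fun c => s - c)
    · intro c hc; simp only [Finset.coe_filter, Set.mem_ofPred_eq] at hc; exact hc.2
    · intro a _ b _ h; simpa using h
  have h2 : ∑ c ∈ C, D.card = C.card * D.card := by simp
  have h3 : ∑ c ∈ C, D.card = ∑ c ∈ C, lamF D c + ∑ c ∈ C, (D.filter (fun s => s - c ∈ D)).card := by
    rw [← Finset.sum_add_distrib]
    exact Finset.sum_congr rfl (fun c _ => (lamF_add_card D c).symm)
  omega

/-- balls in the Cayley graph -/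
def cball (S : Finset G) : ℕ → Finset G
  | 0 => {0}
  | n + 1 => (cball S n ×ˢ S).image (fun p => p.1 + p.2)

lemma mem_cball_succ (S : Finset G) (n : ℕ) (x : G) :
    x ∈ cball S (n+1) ↔ ∃ y ∈ cball S n, ∃ s ∈ S, y + s = x := by
  simp only [cball, Finset.mem_image, Finset.mem_product, Prod.exists]
  constructor
  · rintro ⟨a, b, ⟨h1, h2⟩, h3⟩; exact ⟨a, h1, b, h2, h3⟩
  · rintro ⟨a, h1, b, h2, h3⟩; exact ⟨a, b, ⟨h1, h2⟩, h3⟩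

lemma cball_lam (D S : Finset G) (g : ℕ) (hS : ∀ x ∈ S, lamF D x ≤ g) (n : ℕ) :
    ∀ x ∈ cball S n, lamF D x ≤ n * g := by
  induction n with
  | zero => intro x hx; simp [cball] at hx; subst hx; simp [lamF_zero]
  | succ n ih =>
    intro x hx
    obtain ⟨y, hy, s, hs, rfl⟩ := (mem_cball_succ S n x).1 hx
    have := lamF_add D y s
    have := ih y hy
    have := hS s hs
    nlinarith

lemma cball_mono (S : Finset G) (h0 : (0:G) ∈ S) (n : ℕ) : cball S n ⊆ cball S (n+1) := by
  intro x hx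
  exact (mem_cball_succ S n x).2 ⟨x, hx, 0, h0, by simp⟩

lemma cball_stable [Fintype G] (S : Finset G) (h0 : (0:G) ∈ S)
    (hgen : AddSubgroup.closure (S : Set G) = ⊤) (n : ℕ) (h : cball S (n+1) ⊆ cball S n) :
    cball S n = Finset.univ := by
  have hz : ∀ k, (0:G) ∈ cball S k := by
    intro k; induction k with
    | zero => simp [cball]
    | succ k ih => exact cball_mono S h0 k ih
  have key : ∀ x ∈ AddSubgroup.closure (S : Set G), ∀ y ∈ cball S n, y + x ∈ cball S n := by
    intro x hx
    induction hx using AddSubgroup.closure_induction with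
    | mem x hx => intro y hy; exact h ((mem_cball_succ S n _).2 ⟨y, hy, x, hx, rfl⟩)
    | zero => intro y hy; simpa using hy
    | add a b _ _ ha hb => intro y hy; rw [← add_assoc]; exact hb _ (ha _ hy)
    | neg a _ ha =>
      intro y hy
      -- injective self map of a finite set
      have hinj : Set.InjOn (fun z => z + a) (cball S n : Set G) := by
        intro p _ q _ hpq; simpa using hpq
      have hmaps : ∀ z ∈ cball S n, (fun z => z + a) z ∈ cball S n := fun z hz => ha z hz
      have hsurj := Finset.surjOn_of_injOn_of_card_le (fun z => z + a) hmaps hinj le_rfl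
      obtain ⟨z, hz, hzy⟩ := hsurj hy
      have : y + -a = z := by rw [← hzy]; simp
      rw [this]; exact hz
  ext x
  simp only [Finset.mem_univ, iff_true]
  have := key x (by rw [hgen]; trivial) 0 (hz n)
  simpa using this

lemma cball_growth [Fintype G] (S : Finset G) (h0 : (0:G) ∈ S) (hneg : ∀ x ∈ S, -x ∈ S)
    (hgen : AddSubgroup.closure (S : Set G) = ⊤) (i : ℕ) :
    cball S (3*i+1) = Finset.univ ∨ (i+1) * S.card ≤ (cball S (3*i+1)).card := by
  induction i with
  | zero =>
    right
    have h1 : cball S (3*0+1) = S := by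
      ext x
      rw [show 3*0+1 = 0+1 from rfl, mem_cball_succ]
      simp [cball]
    rw [h1]; simp
  | succ i ih =>
    have hup : ∀ n, cball S n = Finset.univ → cball S (n+1) = Finset.univ := by
      intro n hn; rw [Finset.eq_univ_iff_forall] at hn ⊢; exact fun x => cball_mono S h0 n (hn x)
    by_cases hst : cball S (3*i+2+1) ⊆ cball S (3*i+2)
    · left
      exact hup _ (hup _ (cball_stable S h0 hgen _ hst))
    · rcases ih with ih | ih
      · left; exact hup _ (hup _ (hup _ ih))
      · right
        rw [Finset.not_subset] at hst
        obtain ⟨z, hz, hz'⟩ := hst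
        have hsub : cball S (3*i+1) ∪ S.image (fun s => z + s) ⊆ cball S (3*(i+1)+1) := by
          intro x hx
          rw [Finset.mem_union] at hx
          rcases hx with hx | hx
          · exact cball_mono S h0 _ (cball_mono S h0 _ (cball_mono S h0 _ hx))
          · obtain ⟨s, hs, rfl⟩ := Finset.mem_image.1 hx
            exact (mem_cball_succ S (3*i+2+1) _).2 ⟨z, hz, s, hs, rfl⟩
        have hdis : Disjoint (cball S (3*i+1)) (S.image (fun s => z + s)) := by
          rw [Finset.disjoint_left]
          intro x hx hx'
          obtain ⟨s, hs, rfl⟩ := Finset.mem_image.1 hx'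
          apply hz'
          exact (mem_cball_succ S (3*i+1) _).2 ⟨z + s, hx, -s, hneg s hs, by abel⟩
        have hc := Finset.card_le_card hsub
        rw [Finset.card_union_of_disjoint hdis, Finset.card_image_of_injective _ (add_right_injective z)] at hc
        nlinarith

/-- Olson type lemma. -/
lemma olson_aux [Fintype G] (B E : Finset G) (g : ℕ)
    (hgen : AddSubgroup.closure (E : Set G) = ⊤) (hB0 : 0 < B.card)
    (hB : 2 * B.card ≤ Fintype.card G) (hlam : ∀ x ∈ E, lamF B x ≤ g)
    (hBg : 4 * g ≤ B.card) : E.card ≤ 24 * g := by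
  by_contra hE
  push Not at hE
  set S : Finset G := insert 0 (E ∪ E.image (fun x => -x)) with hSdef
  have h0 : (0:G) ∈ S := by simp [hSdef]
  have hneg : ∀ x ∈ S, -x ∈ S := by
    intro x hx
    simp only [hSdef, Finset.mem_insert, Finset.mem_union, Finset.mem_image] at hx ⊢
    rcases hx with rfl | hx | ⟨y, hy, rfl⟩
    · left; simp
    · right; right; exact ⟨x, hx, rfl⟩
    · right; left; simpa using hy
  have hES : E ⊆ S := by intro x hx; simp [hSdef, hx]
  have hgenS : AddSubgroup.closure (S : Set G) = ⊤ := by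
    rw [eq_top_iff, ← hgen]; exact AddSubgroup.closure_mono (by exact_mod_cast hES)
  have hlamS : ∀ x ∈ S, lamF B x ≤ g := by
    intro x hx
    simp only [hSdef, Finset.mem_insert, Finset.mem_union, Finset.mem_image] at hx
    rcases hx with rfl | hx | ⟨y, hy, rfl⟩
    · simp [lamF_zero]
    · exact hlam x hx
    · rw [lamF_neg]; exact hlam y hy
  have hSc : 24 * g < S.card := lt_of_lt_of_le hE (Finset.card_le_card hES)
  have hSpos : 0 < S.card := by omega
  set i := 2 * B.card / S.card with hi
  have hlarge : 2 * B.card ≤ (cball S (3*i+1)).card := by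
    rcases cball_growth S h0 hneg hgenS i with h | h
    · rw [h, Finset.card_univ]; exact hB
    · have : 2 * B.card < (i+1) * S.card := by
        have h3 := Nat.lt_mul_div_succ (2 * B.card) hSpos
        rw [mul_comm (i+1)]; exact h3
      omega
  obtain ⟨C, hC, hCc⟩ := Finset.exists_subset_card_eq hlarge
  have hsum := lamF_sum B C
  have hle : ∑ c ∈ C, lamF B c ≤ C.card * ((3*i+1)*g) := by
    rw [← smul_eq_mul]
    apply Finset.sum_le_card_nsmul
    intro c hc
    exact cball_lam B S g hlamS _ c (hC hc)
  rw [hCc] at hle hsum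
  -- B^2 ≤ 2 B (3i+1) g
  have h1 : B.card ≤ 2 * ((3*i+1)*g) := by
    have : B.card * B.card ≤ B.card * (2 * ((3*i+1)*g)) := by nlinarith
    exact Nat.le_of_mul_le_mul_left this hB0
  have h2 : i * S.card ≤ 2 * B.card := Nat.div_mul_le_self _ _
  rcases Nat.eq_zero_or_pos g with rfl | hg
  · omega
  · -- i * 24 g < = 2B ; with strictness
    rcases Nat.eq_zero_or_pos i with h | hipos
    · rw [h] at h1; omega
    · have : i * (24 * g) < i * S.card := Nat.mul_lt_mul_of_pos_left hSc hipos
      nlinarith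

lemma olson [Fintype G] (D E : Finset G) (g : ℕ)
    (hgen : AddSubgroup.closure (E : Set G) = ⊤) (hD0 : 0 < D.card)
    (hlam : ∀ x ∈ E, lamF D x ≤ g) (hdis : Disjoint E D) (hDg : 4 * g ≤ D.card) :
    E.card ≤ 24 * g := by
  by_contra hE
  push Not at hE
  have hEc : E ⊆ Dᶜ := by
    intro x hx; rw [Finset.mem_compl]; exact Finset.disjoint_left.1 hdis hx
  have hc := Finset.card_le_card hEc
  have hadd := Finset.card_add_card_compl D
  rcases le_total (2 * D.card) (Fintype.card G) with h | h
  · exact absurd (olson_aux D E g hgen hD0 h hlam hDg) (by omega)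
  · refine absurd (olson_aux Dᶜ E g hgen (by omega) (by omega) ?_ (by omega)) (by omega)
    intro x hx; rw [lamF_compl]; exact hlam x hx

/-- relative version -/
lemma olson_rel (D E : Finset G) (g : ℕ) (H : AddSubgroup G) [Finite G]
    (hgen : AddSubgroup.closure (E : Set G) = H) (hD0 : 0 < D.card) (hDH : ∀ x ∈ D, x ∈ H)
    (hlam : ∀ x ∈ E, lamF D x ≤ g) (hdis : Disjoint E D) (hDg : 4 * g ≤ D.card) :
    E.card ≤ 24 * g := by
  classical
  have hEH : ∀ x ∈ E, x ∈ H := fun x hx => by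
    rw [← hgen]; exact AddSubgroup.subset_closure hx
  have : Fintype H := Fintype.ofFinite H
  set D' : Finset H := D.subtype (fun x => x ∈ H) with hD'
  set E' : Finset H := E.subtype (fun x => x ∈ H) with hE'
  have hDc : D'.card = D.card := by
    rw [hD', Finset.card_subtype, Finset.filter_true_of_mem hDH]
  have hEc : E'.card = E.card := by
    rw [hE', Finset.card_subtype, Finset.filter_true_of_mem hEH]
  rw [← hEc]
  apply olson D' E' g
  · have h1 : (E' : Set H) = ((↑) : H → G) ⁻¹' (E : Set G) := by ext x; simp [hE']
    rw [h1]
    subst hgen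
    exact AddSubgroup.closure_closure_coe_preimage
  · omega
  · intro x hx
    have hx' : (x:G) ∈ E := by simpa [hE'] using hx
    refine le_trans (le_of_eq ?_) (hlam x hx')
    unfold lamF
    apply Finset.card_bij (fun (s : ↥H) _ => (s:G))
    · intro s hs; simpa [hD', Finset.mem_filter] using hs
    · intro a _ b _ h; exact Subtype.ext h
    · intro b hb
      simp only [Finset.mem_filter] at hb
      exact ⟨⟨b, hDH b hb.1⟩, by simpa [hD', Finset.mem_filter] using hb, rfl⟩
  · rw [Finset.disjoint_left] at hdis ⊢
    intro x hx hx'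
    exact hdis (by simpa [hE'] using hx) (by simpa [hD'] using hx')
  · omega
end OlsonPart


section Level1
open Classical

/-- subgroup of `ℤ` generated by a multiset -/
def LL (W : Multiset ℕ) : AddSubgroup ℤ := AddSubgroup.closure {x | ∃ t ∈ W, (t : ℤ) = x}

/-- subgroup of `ZMod a` generated by a multiset -/
def Hs (a : ℕ) (W : Multiset ℕ) : AddSubgroup (ZMod a) :=
  AddSubgroup.closure {x | ∃ t ∈ W, (t : ZMod a) = x}

/-- differences `s - σ Y₁` -/
noncomputable def Dset {a : ℕ} (D0 : Finset (ZMod a)) (Y : Multiset ℕ) : Finset (ZMod a) :=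
  (D0 ×ˢ Y.powerset.toFinset).image (fun p => p.1 - ((p.2.sum : ℕ) : ZMod a))

/-- part in a subgroup -/
noncomputable def DHs {a : ℕ} (D0 : Finset (ZMod a)) (Y : Multiset ℕ) (H : AddSubgroup (ZMod a)) :
    Finset (ZMod a) := (Dset D0 Y).filter (fun x => x ∈ H)

/-- container condition -/
def ContOK {a : ℕ} (D0 : Finset (ZMod a)) (Y W : Multiset ℕ) (γ : ℕ) : Prop :=
  ∃ g ≤ γ, (∀ t ∈ W, lamF (DHs D0 Y (Hs a W)) (t : ZMod a) ≤ g) ∧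
    4 * g ≤ (DHs D0 Y (Hs a W)).card

lemma mem_Dset {a : ℕ} {D0 : Finset (ZMod a)} {Y : Multiset ℕ} {x : ZMod a} :
    x ∈ Dset D0 Y ↔ ∃ s ∈ D0, ∃ Y₁ ≤ Y, s - ((Y₁.sum : ℕ) : ZMod a) = x := by
  simp only [Dset, Finset.mem_image, Finset.mem_product, Multiset.mem_toFinset,
    Multiset.mem_powerset, Prod.exists]
  constructor
  · rintro ⟨p, q, ⟨h1, h2⟩, h3⟩; exact ⟨p, h1, q, h2, h3⟩
  · rintro ⟨p, h1, q, h2, h3⟩; exact ⟨p, q, ⟨h1, h2⟩, h3⟩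

lemma subset_Dset {a : ℕ} (D0 : Finset (ZMod a)) (Y : Multiset ℕ) : D0 ⊆ Dset D0 Y := by
  intro x hx
  exact mem_Dset.2 ⟨x, hx, 0, Multiset.zero_le _, by simp⟩

lemma Dset_zero {a : ℕ} (D0 : Finset (ZMod a)) : Dset D0 0 = D0 := by
  ext x
  rw [mem_Dset]
  simp

lemma Dset_cons_left {a : ℕ} (D0 : Finset (ZMod a)) (Y : Multiset ℕ) (t : ℕ) :
    Dset D0 Y ⊆ Dset D0 (t ::ₘ Y) := by
  intro x hx
  obtain ⟨s, hs, Y₁, hY, rfl⟩ := mem_Dset.1 hx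
  exact mem_Dset.2 ⟨s, hs, Y₁, hY.trans (Multiset.le_cons_self _ _), rfl⟩

lemma Dset_cons_right {a : ℕ} (D0 : Finset (ZMod a)) (Y : Multiset ℕ) (t : ℕ) (x : ZMod a)
    (hx : x ∈ Dset D0 Y) : x - t ∈ Dset D0 (t ::ₘ Y) := by
  obtain ⟨s, hs, Y₁, hY, rfl⟩ := mem_Dset.1 hx
  exact mem_Dset.2 ⟨s, hs, t ::ₘ Y₁, Multiset.cons_le_cons _ hY, by simp; ring⟩

lemma grow_aux {G : Type*} [AddCommGroup G] [DecidableEq G] (D D' : Finset G) (t : G) (h1 : D ⊆ D')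
    (h2 : ∀ x ∈ D, x - t ∈ D') : D.card + lamF D t ≤ D'.card := by
  have h3 : D ∪ (D.filter (fun s => s - t ∉ D)).image (fun s => s - t) ⊆ D' := by
    intro x hx
    rcases Finset.mem_union.1 hx with hx | hx
    · exact h1 hx
    · obtain ⟨s, hs, rfl⟩ := Finset.mem_image.1 hx
      exact h2 s (Finset.mem_filter.1 hs).1
  have h4 : Disjoint D ((D.filter (fun s => s - t ∉ D)).image (fun s => s - t)) := by
    rw [Finset.disjoint_left]
    intro x hx hx'
    obtain ⟨s, hs, rfl⟩ := Finset.mem_image.1 hx'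
    exact (Finset.mem_filter.1 hs).2 hx
  have h5 := Finset.card_le_card h3
  rw [Finset.card_union_of_disjoint h4, Finset.card_image_of_injective _ (sub_left_injective)] at h5
  exact h5

lemma lamF_DHs_le {a : ℕ} (D0 : Finset (ZMod a)) (Y : Multiset ℕ) (H : AddSubgroup (ZMod a))
    (t : ZMod a) (ht : t ∈ H) : lamF (DHs D0 Y H) t ≤ lamF (Dset D0 Y) t := by
  unfold lamF
  apply Finset.card_le_card
  intro s hs
  simp only [DHs, Finset.mem_filter] at hs ⊢
  refine ⟨hs.1.1, fun h => hs.2 ⟨h, H.sub_mem hs.1.2 ht⟩⟩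

lemma LL_mono {W W' : Multiset ℕ} (h : W ≤ W') : LL W ≤ LL W' := by
  apply AddSubgroup.closure_mono
  rintro x ⟨t, ht, rfl⟩
  exact ⟨t, Multiset.mem_of_le h ht, rfl⟩

lemma Hs_eq_map (a : ℕ) (W : Multiset ℕ) :
    Hs a W = (LL W).map (Int.castAddHom (ZMod a)) := by
  unfold Hs LL
  rw [AddMonoidHom.map_closure]
  congr 1
  ext x
  constructor
  · rintro ⟨t, ht, rfl⟩; exact ⟨t, ⟨t, ht, rfl⟩, by simp⟩
  · rintro ⟨_, ⟨t, ht, rfl⟩, rfl⟩; exact ⟨t, ht, by simp⟩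

lemma LL_index_le (W : Multiset ℕ) (t : ℕ) (ht : t ∈ W) (h0 : 0 < t) :
    (LL W).index ≠ 0 ∧ (LL W).index ≤ t := by
  have h1 : AddSubgroup.zmultiples (t : ℤ) ≤ LL W := by
    rw [AddSubgroup.zmultiples_le]
    exact AddSubgroup.subset_closure ⟨t, ht, rfl⟩
  have h2 := AddSubgroup.index_dvd_of_le h1
  rw [Int.index_zmultiples] at h2
  simp only [Int.natAbs_natCast] at h2
  exact ⟨fun h => by rw [h] at h2; simp at h2; omega, Nat.le_of_dvd h0 h2⟩

lemma index_double (L L' : AddSubgroup ℤ) (hle : L' ≤ L) (hne : L' ≠ L) (hi : L'.index ≠ 0) :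
    2 * L.index ≤ L'.index := by
  have h1 := AddSubgroup.relIndex_mul_index hle
  have h2 : L'.relIndex L ≠ 1 := by
    intro h
    exact hne (le_antisymm hle (AddSubgroup.relIndex_eq_one.1 h))
  have h3 : L'.relIndex L ≠ 0 := by
    intro h; rw [h] at h1; simp at h1; exact hi h1.symm
  rw [← h1]
  exact Nat.mul_le_mul_right _ (by omega)

lemma zero_mem_DHs {a : ℕ} (D0 : Finset (ZMod a)) (Y : Multiset ℕ) (H : AddSubgroup (ZMod a))
    (h : (0 : ZMod a) ∈ D0) : (0 : ZMod a) ∈ DHs D0 Y H :=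
  Finset.mem_filter.2 ⟨subset_Dset D0 Y h, H.zero_mem⟩

lemma level1 {a : ℕ} (D0 : Finset (ZMod a)) (V : Multiset ℕ) (γ R κ : ℕ)
    (hV : ∀ t ∈ V, 0 < t) (h0 : (0 : ZMod a) ∈ D0) (hκ : κ < Multiset.card V)
    (hR : 4 * γ * 4 ^ R ≤ 5 ^ R)
    (hNC : ∀ Y ≤ V, Multiset.card Y < κ → ¬ ContOK D0 Y (V - Y) γ) :
    ∀ i ≤ κ, ∃ Y ≤ V, Multiset.card Y = i ∧ ∃ b c r : ℕ, b ≤ R * c + r ∧ r ≤ R ∧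
      5 ^ r ≤ 4 ^ r * (DHs D0 Y (Hs a (V - Y))).card ∧
      2 ^ c * (LL V).index ≤ (LL (V - Y)).index ∧
      D0.card + γ * i ≤ (Dset D0 Y).card + γ * b := by
  intro i
  induction i with
  | zero =>
    intro _
    refine ⟨0, Multiset.zero_le _, rfl, 0, 0, 0, by simp, by simp, ?_, by simp, ?_⟩
    · simp only [pow_zero, one_mul]
      exact Finset.card_pos.2 ⟨0, zero_mem_DHs _ _ _ h0⟩
    · rw [Dset_zero]
  | succ i ih =>
    intro hi
    obtain ⟨Y, hY, hYc, b, c, r, hb, hr, hD, hidx, hgr⟩ := ih (by omega)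
    have hWc : Multiset.card (V - Y) = Multiset.card V - i := by
      rw [Multiset.card_sub hY, hYc]
    have hWne : (V - Y).toFinset.Nonempty := by
      rw [Multiset.toFinset_nonempty]
      intro h; rw [h] at hWc; simp at hWc; omega
    obtain ⟨t, ht, htmax⟩ := Finset.exists_max_image (V - Y).toFinset
      (fun t => lamF (DHs D0 Y (Hs a (V - Y))) (t : ZMod a)) hWne
    rw [Multiset.mem_toFinset] at ht
    have hmax : ∀ s ∈ V - Y, lamF (DHs D0 Y (Hs a (V - Y))) (s : ZMod a) ≤
        lamF (DHs D0 Y (Hs a (V - Y))) (t : ZMod a) := fun s hs =>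
      htmax s (Multiset.mem_toFinset.2 hs)
    set g := lamF (DHs D0 Y (Hs a (V - Y))) (t : ZMod a) with hg
    have htH : (t : ZMod a) ∈ Hs a (V - Y) := AddSubgroup.subset_closure ⟨t, ht, rfl⟩
    have hle : t ::ₘ Y ≤ V := by
      have := add_le_add_left (Multiset.singleton_le.2 ht) Y
      rw [Multiset.sub_add_cancel hY, Multiset.singleton_add] at this
      exact this
    have hsub : V - (t ::ₘ Y) ≤ V - Y := by
      exact tsub_le_tsub_left (Multiset.le_cons_self _ _) _
    have hgrow : (Dset D0 Y).card + g ≤ (Dset D0 (t ::ₘ Y)).card := by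
      have h1 := grow_aux (Dset D0 Y) (Dset D0 (t ::ₘ Y)) (t : ZMod a)
        (Dset_cons_left D0 Y t) (Dset_cons_right D0 Y t)
      have h2 := lamF_DHs_le D0 Y (Hs a (V - Y)) t htH
      omega
    have hgrowH : (LL (V - (t ::ₘ Y)) = LL (V - Y)) →
        (DHs D0 Y (Hs a (V - Y))).card + g ≤
          (DHs D0 (t ::ₘ Y) (Hs a (V - (t ::ₘ Y)))).card := by
      intro h
      have hH : Hs a (V - (t ::ₘ Y)) = Hs a (V - Y) := by rw [Hs_eq_map, Hs_eq_map, h]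
      rw [hH]
      apply grow_aux
      · intro x hx
        rw [DHs, Finset.mem_filter] at hx ⊢
        exact ⟨Dset_cons_left D0 Y t hx.1, hx.2⟩
      · intro x hx
        rw [DHs, Finset.mem_filter] at hx ⊢
        exact ⟨Dset_cons_right D0 Y t x hx.1, AddSubgroup.sub_mem _ hx.2 htH⟩
    have hnew1 : 1 ≤ (DHs D0 (t ::ₘ Y) (Hs a (V - (t ::ₘ Y)))).card :=
      Finset.card_pos.2 ⟨0, zero_mem_DHs _ _ _ h0⟩
    have hidx' : LL (V - (t ::ₘ Y)) ≠ LL (V - Y) →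
        2 ^ (c + 1) * (LL V).index ≤ (LL (V - (t ::ₘ Y))).index := by
      intro hne
      have hc : Multiset.card (V - (t ::ₘ Y)) = Multiset.card V - (i + 1) := by
        rw [Multiset.card_sub hle, Multiset.card_cons, hYc]
      obtain ⟨u, hu⟩ : ∃ u, u ∈ V - (t ::ₘ Y) := by
        apply Multiset.exists_mem_of_ne_zero
        intro h; rw [h] at hc; simp at hc; omega
      have hu0 := hV u (Multiset.mem_of_le (Multiset.sub_le_self _ _) hu)
      have h1 := (LL_index_le _ u hu hu0).1
      have h2 := index_double _ _ (LL_mono hsub) hne h1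
      calc 2 ^ (c + 1) * (LL V).index = 2 * (2 ^ c * (LL V).index) := by ring
        _ ≤ 2 * (LL (V - Y)).index := by omega
        _ ≤ _ := h2
    refine ⟨t ::ₘ Y, hle, by simp [hYc], ?_⟩
    by_cases hgγ : γ ≤ g
    · by_cases hL : LL (V - (t ::ₘ Y)) = LL (V - Y)
      · refine ⟨b, c, r, hb, hr, ?_, ?_, ?_⟩
        · refine hD.trans (Nat.mul_le_mul_left _ ?_)
          have := hgrowH hL; omega
        · rw [hL]; exact hidx
        · rw [mul_add]; omega
      · refine ⟨b, c + 1, 0, ?_, by simp, by simpa using hnew1, hidx' hL, ?_⟩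
        · rw [mul_add]; omega
        · rw [mul_add]; omega
    · have hsmall : (DHs D0 Y (Hs a (V - Y))).card < 4 * g := by
        by_contra hcon
        exact hNC Y hY (by omega) ⟨g, by omega, hmax, by omega⟩
      have hrR : r < R := by
        by_contra hcon
        have hrR : r = R := by omega
        subst hrR
        have h4 : 0 < 4 ^ r := by positivity
        have : 4 ^ r * (DHs D0 Y (Hs a (V - Y))).card < 4 ^ r * (4 * γ) :=
          Nat.mul_lt_mul_of_pos_left (by omega) h4
        nlinarith
      have hfin : D0.card + γ * (i + 1) ≤ (Dset D0 (t ::ₘ Y)).card + γ * (b + 1) := by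
        rw [mul_add, mul_add]; omega
      by_cases hL : LL (V - (t ::ₘ Y)) = LL (V - Y)
      · refine ⟨b + 1, c, r + 1, by omega, hrR, ?_, ?_, hfin⟩
        · have h1 := hgrowH hL
          have h2 : 5 * (DHs D0 Y (Hs a (V - Y))).card ≤
            4 * (DHs D0 (t ::ₘ Y) (Hs a (V - (t ::ₘ Y)))).card := by omega
          calc 5 ^ (r + 1) = 5 * 5 ^ r := by ring
            _ ≤ 5 * (4 ^ r * (DHs D0 Y (Hs a (V - Y))).card) := by omega
            _ = 4 ^ r * (5 * (DHs D0 Y (Hs a (V - Y))).card) := by ring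
            _ ≤ 4 ^ r * (4 * (DHs D0 (t ::ₘ Y) (Hs a (V - (t ::ₘ Y)))).card) :=
              Nat.mul_le_mul_left _ h2
            _ = _ := by ring
        · rw [hL]; exact hidx
      · refine ⟨b + 1, c + 1, 0, ?_, by simp, by simpa using hnew1, hidx' hL, hfin⟩
        rw [mul_add]; omega
end Level1


section Level2
open Classical

lemma msum_le {A B : Multiset ℕ} (h : A ≤ B) : A.sum ≤ B.sum := by
  obtain ⟨D, rfl⟩ := Multiset.le_iff_exists_add.1 h
  rw [Multiset.sum_add]; omega

/-- no nontrivial coincidence of subset sums -/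
def SepM (C V : Multiset ℕ) : Prop := ∀ C₁ ≤ C, ∀ Y ≤ V, C₁.sum = Y.sum → Y = 0

/-- differences of subset sums -/
def Bset (C Y : Multiset ℕ) : Set ℤ :=
  {x | ∃ C₁ ≤ C, ∃ Y₁ ≤ Y, x = (C₁.sum : ℤ) - (Y₁.sum : ℤ)}

/-- residues of `Bset ∩ [0,a)` -/
noncomputable def D0s (C Y : Multiset ℕ) (a : ℕ) : Finset (ZMod a) :=
  ((Finset.range a).filter (fun x : ℕ => (x : ℤ) ∈ Bset C Y)).image (fun x : ℕ => (x : ZMod a))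

/-- number of missing elements -/
noncomputable def Fs (C Y : Multiset ℕ) (a : ℕ) : ℕ :=
  ((Finset.range a).filter (fun x : ℕ => (x : ℤ) ∉ Bset C Y)).card

lemma cast_injOn (a : ℕ) : Set.InjOn (fun x : ℕ => (x : ZMod a)) (Finset.range a : Set ℕ) := by
  intro x hx y hy h
  simp only [Finset.coe_range, Set.mem_Iio] at hx hy
  have h1 := (ZMod.natCast_eq_natCast_iff' x y a).1 h
  rwa [Nat.mod_eq_of_lt hx, Nat.mod_eq_of_lt hy] at h1

lemma D0s_card (C Y : Multiset ℕ) (a : ℕ) :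
    (D0s C Y a).card = ((Finset.range a).filter (fun x : ℕ => (x : ℤ) ∈ Bset C Y)).card := by
  unfold D0s
  apply Finset.card_image_of_injOn
  exact (cast_injOn a).mono (by intro x hx; simp at hx ⊢; exact hx.1)

lemma D0s_add_Fs (C Y : Multiset ℕ) (a : ℕ) : (D0s C Y a).card + Fs C Y a = a := by
  rw [D0s_card, Fs, Finset.card_filter_add_card_filter_not, Finset.card_range]

lemma Fs_mono (C Y : Multiset ℕ) {a b : ℕ} (h : a ≤ b) : Fs C Y a ≤ Fs C Y b := by
  apply Finset.card_le_card
  apply Finset.filter_subset_filter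
  exact Finset.range_subset_range.2 h

lemma zero_mem_Bset (C Y : Multiset ℕ) : (0 : ℤ) ∈ Bset C Y :=
  ⟨0, Multiset.zero_le _, 0, Multiset.zero_le _, by simp⟩

lemma mem_D0s {C Y : Multiset ℕ} {a : ℕ} {z : ZMod a} :
    z ∈ D0s C Y a ↔ ∃ x : ℕ, x < a ∧ (x : ℤ) ∈ Bset C Y ∧ (x : ZMod a) = z := by
  simp only [D0s, Finset.mem_image, Finset.mem_filter, Finset.mem_range, and_assoc]

lemma zero_mem_D0s (C Y : Multiset ℕ) {a : ℕ} (ha : 0 < a) : (0 : ZMod a) ∈ D0s C Y a :=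
  mem_D0s.2 ⟨0, ha, by simpa using zero_mem_Bset C Y, by simp⟩

lemma Dset_subset_D0s (C Y Y' : Multiset ℕ) (a : ℕ) (hs : Y'.sum ≤ a) :
    Dset (D0s C Y a) Y' ⊆ D0s (a ::ₘ C) (Y + Y') a := by
  intro z hz
  obtain ⟨s, hs', Y₁, hY₁, rfl⟩ := mem_Dset.1 hz
  obtain ⟨x, hx, ⟨C₁, hC₁, Y₂, hY₂, hxe⟩, rfl⟩ := mem_D0s.1 hs'
  have hle : Y₁.sum ≤ a := (msum_le hY₁).trans hs
  rw [mem_D0s]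
  have hYY : Y₂ + Y₁ ≤ Y + Y' := add_le_add hY₂ hY₁
  by_cases h : Y₁.sum ≤ x
  · refine ⟨x - Y₁.sum, by omega, ⟨C₁, hC₁.trans (Multiset.le_cons_self _ _), Y₂ + Y₁, hYY, ?_⟩, ?_⟩
    · rw [Nat.cast_sub h, hxe, Multiset.sum_add, Nat.cast_add]; ring
    · rw [Nat.cast_sub h]
  · refine ⟨x + a - Y₁.sum, by omega, ⟨a ::ₘ C₁, Multiset.cons_le_cons _ hC₁, Y₂ + Y₁, hYY, ?_⟩, ?_⟩
    · rw [Nat.cast_sub (by omega), Multiset.sum_add, Multiset.sum_cons]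
      rw [Nat.cast_add, Nat.cast_add, Nat.cast_add, hxe]; ring
    · rw [Nat.cast_sub (by omega), Nat.cast_add]; simp

lemma level2 (C V : Multiset ℕ) (γ R κ J m : ℕ)
    (hV : ∀ t ∈ V, 0 < t ∧ t ≤ m) (hR : 4 * γ * 4 ^ R ≤ 5 ^ R) (hC : ∀ a ∈ C, 0 < a)
    (hsum : ∀ Y ≤ V, Multiset.card Y ≤ κ → ∀ a ∈ C, Y.sum ≤ a)
    (hNC : ∀ (Cu : Multiset ℕ) (a : ℕ) (Yu Y : Multiset ℕ), a ::ₘ Cu ≤ C → Yu + Y ≤ V →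
      Multiset.card (Yu + Y) < J → Multiset.card Y < κ →
      ¬ ContOK (D0s Cu Yu a) Y (V - Yu - Y) γ) :
    ∀ (l : List ℕ) (Cu Yu : Multiset ℕ) (a0 : ℕ), l.Pairwise (· ≥ ·) → (l : Multiset ℕ) + Cu ≤ C →
      Yu ≤ V → (∀ a ∈ l, a ≤ a0) → Multiset.card Yu + κ * l.length < Multiset.card V →
      Multiset.card Yu + κ * l.length ≤ J →
      ∃ c, 2 ^ c * (LL (V - Yu)).index ≤ m ∧
        γ * κ * l.length ≤ Fs Cu Yu a0 + γ * R * (c + l.length) := by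
  intro l
  induction l with
  | nil =>
    intro Cu Yu a0 _ _ hYu _ hcard _
    refine ⟨0, ?_, by simp⟩
    obtain ⟨u, hu⟩ : ∃ u, u ∈ V - Yu := by
      apply Multiset.exists_mem_of_ne_zero
      intro h
      have := Multiset.card_sub hYu
      rw [h] at this; simp at this hcard; omega
    have hu' := hV u (Multiset.mem_of_le (Multiset.sub_le_self _ _) hu)
    have := (LL_index_le _ u hu hu'.1).2
    simp; omega
  | cons a l ih =>
    intro Cu Yu a0 hsort hlC hYu ha0 hcard hJ
    have haCu : a ::ₘ Cu ≤ C := by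
      refine le_trans ?_ hlC
      rw [← Multiset.cons_coe, Multiset.cons_add]
      exact Multiset.cons_le_cons _ (Multiset.le_add_left _ _)
    have haC : a ∈ C := Multiset.mem_of_le haCu (Multiset.mem_cons_self _ _)
    have ha := hC a haC
    rw [List.length_cons, mul_add, mul_one] at hcard hJ
    have hVYc := Multiset.card_sub hYu
    have hsubV : V - Yu ≤ V := Multiset.sub_le_self _ _
    obtain ⟨Y, hY, hYc, b, c, r, hb, hr, _, hidx, hgr⟩ :=
      level1 (D0s Cu Yu a) (V - Yu) γ R κ
        (fun t ht => (hV t (Multiset.mem_of_le hsubV ht)).1)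
        (zero_mem_D0s Cu Yu ha) (by omega) hR
        (by
          intro Y hY hYκ
          apply hNC Cu a Yu Y haCu
          · have := add_le_add_right hY Yu
            rwa [add_comm Yu (V - Yu), Multiset.sub_add_cancel hYu] at this
          · rw [Multiset.card_add]; omega
          · exact hYκ) κ le_rfl
    have hYuY : Yu + Y ≤ V := by
      have := add_le_add_right hY Yu
      rwa [add_comm Yu (V - Yu), Multiset.sub_add_cancel hYu] at this
    rw [List.pairwise_cons] at hsort
    obtain ⟨c', hidx', hgr'⟩ := ih (a ::ₘ Cu) (Yu + Y) a hsort.2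
      (by
        refine le_trans (le_of_eq ?_) hlC
        rw [← Multiset.cons_coe, Multiset.cons_add, Multiset.add_cons]) hYuY
      (fun x hx => hsort.1 x hx) (by rw [Multiset.card_add]; omega)
      (by rw [Multiset.card_add]; omega)
    have hYs : Y.sum ≤ a := hsum Y (hY.trans hsubV) (by omega) a haC
    have h1 := Finset.card_le_card (Dset_subset_D0s Cu Yu Y a hYs)
    have h2 := D0s_add_Fs Cu Yu a
    have h3 := D0s_add_Fs (a ::ₘ Cu) (Yu + Y) a
    have h4 := Fs_mono Cu Yu (ha0 a (by simp))
    refine ⟨c + c', ?_, ?_⟩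
    · rw [← tsub_tsub] at hidx' 
      rw [show V - Yu - Y = (V - Yu) - Y from rfl] at hidx'
      calc 2 ^ (c + c') * (LL (V - Yu)).index = 2 ^ c' * (2 ^ c * (LL (V - Yu)).index) := by ring
        _ ≤ 2 ^ c' * (LL (V - Yu - Y)).index := Nat.mul_le_mul_left _ hidx
        _ ≤ m := hidx'
    · rw [List.length_cons]
      have h5 : γ * b ≤ γ * (R * c + R) := Nat.mul_le_mul_left _ (by omega)
      have h6 : γ * κ * (l.length + 1) = γ * κ * l.length + γ * κ := by ring
      have h7 : γ * R * (c + c' + (l.length + 1)) = γ * (R * c + R) + γ * R * (c' + l.length) := by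
        ring
      rw [h6, h7]
      omega

/-- container attached to a fingerprint -/
noncomputable def EN (Cu : Multiset ℕ) (a : ℕ) (Yu Y : Multiset ℕ) (h g : ℕ) : Finset ℕ :=
  (Finset.range a).filter (fun x : ℕ =>
    (x : ZMod a) ∈ AddSubgroup.zmultiples (h : ZMod a) ∧
    (x : ZMod a) ∉ DHs (D0s Cu Yu a) Y (AddSubgroup.zmultiples (h : ZMod a)) ∧
    lamF (DHs (D0s Cu Yu a) Y (AddSubgroup.zmultiples (h : ZMod a))) (x : ZMod a) ≤ g)

lemma Hs_zmultiples (a m : ℕ) (W : Multiset ℕ) (t : ℕ) (ht : t ∈ W) (h0 : 0 < t) (hm : t ≤ m) :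
    ∃ h ≤ m, Hs a W = AddSubgroup.zmultiples (h : ZMod a) := by
  obtain ⟨x, hx⟩ := Int.subgroup_cyclic (LL W)
  have h1 := (LL_index_le W t ht h0).2
  have hx' : LL W = AddSubgroup.zmultiples (x.natAbs : ℤ) := by
    rw [hx, ← AddSubgroup.zmultiples_eq_closure, Int.zmultiples_natAbs]
  refine ⟨x.natAbs, ?_, ?_⟩
  · rw [hx', Int.index_zmultiples] at h1
    rw [Int.natAbs_natCast] at h1; omega
  · rw [Hs_eq_map, hx', AddMonoidHom.map_zmultiples]; simp

lemma container (C V Cu : Multiset ℕ) (a : ℕ) (Yu Y : Multiset ℕ) (γ κ m : ℕ) (hSep : SepM C V)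
    (hV : ∀ t ∈ V, 0 < t ∧ t ≤ m) (haCu : a ::ₘ Cu ≤ C) (hYuY : Yu + Y ≤ V)
    (ha : 0 < a) (hYκ : Multiset.card Y < κ)
    (hsum : ∀ Y ≤ V, Multiset.card Y ≤ κ → Y.sum ≤ a) (hne : V - Yu - Y ≠ 0)
    (hCO : ContOK (D0s Cu Yu a) Y (V - Yu - Y) γ) :
    ∃ h ≤ m, ∃ g ≤ γ, (EN Cu a Yu Y h g).card ≤ 24 * g ∧
      ∀ t ∈ V - Yu - Y, t ∈ EN Cu a Yu Y h g := by
  have : NeZero a := ⟨by omega⟩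
  set W := V - Yu - Y with hW
  have hWV : W ≤ V := (Multiset.sub_le_self _ _).trans (Multiset.sub_le_self _ _)
  have hWYY : W + (Yu + Y) = V := by
    rw [hW, tsub_tsub]; exact Multiset.sub_add_cancel hYuY
  obtain ⟨t0, ht0⟩ := Multiset.exists_mem_of_ne_zero hne
  have ht0' := hV t0 (Multiset.mem_of_le hWV ht0)
  obtain ⟨h, hm, hH⟩ := Hs_zmultiples a m W t0 ht0 ht0'.1 ht0'.2
  obtain ⟨g, hg, hlam, hcard⟩ := hCO
  rw [hH] at hlam hcard
  set D := DHs (D0s Cu Yu a) Y (AddSubgroup.zmultiples (h : ZMod a)) with hD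
  -- hole property
  have hole : ∀ t ∈ W, (t : ZMod a) ∉ D := by
    intro t ht htD
    obtain ⟨s, hs, Y₁, hY₁, hst⟩ := mem_Dset.1 (Finset.mem_filter.1 htD).1
    obtain ⟨x, hx, ⟨C₁, hC₁, Y₂, hY₂, hxe⟩, rfl⟩ := mem_D0s.1 hs
    have htY : t ::ₘ (Y₂ + Y₁) ≤ V := by
      rw [← hWYY, ← Multiset.singleton_add]
      exact add_le_add (Multiset.singleton_le.2 ht) (add_le_add hY₂ hY₁)
    have htY₁ : t ::ₘ Y₁ ≤ V := by
      refine le_trans (Multiset.cons_le_cons _ ?_) htY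
      exact Multiset.le_add_left _ _
    have hle : t + Y₁.sum ≤ a := by
      have := hsum (t ::ₘ Y₁) htY₁ (by
        have := Multiset.card_le_card hY₁
        rw [Multiset.card_cons]; omega)
      simpa using this
    have hmod : ((t + Y₁.sum : ℕ) : ZMod a) = (x : ZMod a) := by
      rw [Nat.cast_add, ← hst]; ring
    have hne0 : t ::ₘ (Y₂ + Y₁) ≠ 0 := Multiset.cons_ne_zero
    rcases Nat.lt_or_ge (t + Y₁.sum) a with h1 | h1
    · have := cast_injOn a (by simpa using h1) (by simpa using hx) hmod
      apply hne0
      apply hSep C₁ (hC₁.trans ((Multiset.le_cons_self _ _).trans haCu)) _ htY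
      rw [Multiset.sum_cons, Multiset.sum_add]
      omega
    · have h2 : t + Y₁.sum = a := by omega
      rw [h2] at hmod
      have h3 : ((0 : ℕ) : ZMod a) = (x : ZMod a) := by rw [← hmod]; simp
      have := cast_injOn a (by simpa using ha) (by simpa using hx) h3
      apply hne0
      apply hSep (a ::ₘ C₁) ((Multiset.cons_le_cons _ hC₁).trans haCu) _ htY
      rw [Multiset.sum_cons, Multiset.sum_cons, Multiset.sum_add]
      omega
  have hta : ∀ t ∈ W, t < a := by
    intro t ht
    have h1 := hsum {t} ((Multiset.singleton_le.2 ht).trans hWV) (by simp; omega)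
    simp at h1
    rcases Nat.lt_or_ge t a with h2 | h2
    · exact h2
    · exfalso
      have h3 : t = a := by omega
      apply hole t ht
      rw [h3]; simp only [CharP.cast_eq_zero]
      exact zero_mem_DHs _ _ _ (zero_mem_D0s _ _ ha)
  have hmemH : ∀ t ∈ W, (t : ZMod a) ∈ AddSubgroup.zmultiples (h : ZMod a) := by
    intro t ht; rw [← hH]; exact AddSubgroup.subset_closure ⟨t, ht, rfl⟩
  refine ⟨h, hm, g, hg, ?_, ?_⟩
  · set E : Finset (ZMod a) := Finset.univ.filter (fun z =>
      z ∈ AddSubgroup.zmultiples (h : ZMod a) ∧ z ∉ D ∧ lamF D z ≤ g) with hE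
    have h1 : E.card ≤ 24 * g := by
      apply olson_rel D E g (AddSubgroup.zmultiples (h : ZMod a))
      · apply le_antisymm
        · rw [AddSubgroup.closure_le]
          intro z hz
          have hz' : z ∈ E := hz
          rw [hE, Finset.mem_filter] at hz'
          exact hz'.2.1
        · rw [← hH]
          apply AddSubgroup.closure_mono
          rintro _ ⟨t, ht, rfl⟩
          have : (t : ZMod a) ∈ E := by
            rw [hE, Finset.mem_filter]
            exact ⟨Finset.mem_univ _, hmemH t ht, hole t ht, hlam t ht⟩
          exact this
      · exact Finset.card_pos.2 ⟨0, zero_mem_DHs _ _ _ (zero_mem_D0s _ _ ha)⟩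
      · intro x hx; exact (Finset.mem_filter.1 hx).2
      · intro x hx; exact (Finset.mem_filter.1 hx).2.2.2
      · rw [Finset.disjoint_left]
        intro x hx; exact (Finset.mem_filter.1 hx).2.2.1
      · exact hcard
    refine le_trans ?_ h1
    apply Finset.card_le_card_of_injOn (fun x : ℕ => (x : ZMod a))
    · intro x hx
      have hx' : x ∈ EN Cu a Yu Y h g := hx
      rw [EN, Finset.mem_filter] at hx'
      have : (x : ZMod a) ∈ E := by
        rw [hE, Finset.mem_filter]; exact ⟨Finset.mem_univ _, hx'.2⟩
      exact this
    · apply (cast_injOn a).mono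
      intro x hx
      have hx' : x ∈ EN Cu a Yu Y h g := hx
      rw [EN, Finset.mem_filter] at hx'
      exact hx'.1
  · intro t ht
    rw [EN, Finset.mem_filter]
    exact ⟨Finset.mem_range.2 (hta t ht), hmemH t ht, hole t ht, hlam t ht⟩

/-- Combination: existence of a container. -/
lemma exists_container (l : List ℕ) (V : Multiset ℕ) (γ R κ m a0 ℓ : ℕ) (hSep : SepM (l : Multiset ℕ) V)
    (hV : ∀ t ∈ V, 0 < t ∧ t ≤ m) (hR : 4 * γ * 4 ^ R ≤ 5 ^ R)
    (hl : ∀ a ∈ l, 0 < a ∧ a ≤ a0) (hsort : l.Pairwise (· ≥ ·)) (hmℓ : m < 2 ^ ℓ)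
    (hsum : ∀ Y ≤ V, Multiset.card Y ≤ κ → ∀ a ∈ l, Y.sum ≤ a)
    (hcard : κ * l.length < Multiset.card V)
    (hbig : a0 + γ * R * (ℓ + l.length) < γ * κ * l.length) :
    ∃ (Cu : Multiset ℕ) (a : ℕ) (Yu Y : Multiset ℕ) (h g : ℕ), a ::ₘ Cu ≤ (l : Multiset ℕ) ∧
      Yu + Y ≤ V ∧ Multiset.card (Yu + Y) < κ * l.length ∧ h ≤ m ∧ g ≤ γ ∧
      (EN Cu a Yu Y h g).card ≤ 24 * g ∧ ∀ t ∈ V - Yu - Y, t ∈ EN Cu a Yu Y h g := by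
  by_contra hcon
  have hNC : ∀ (Cu : Multiset ℕ) (a : ℕ) (Yu Y : Multiset ℕ), a ::ₘ Cu ≤ (l : Multiset ℕ) →
      Yu + Y ≤ V → Multiset.card (Yu + Y) < κ * l.length → Multiset.card Y < κ →
      ¬ ContOK (D0s Cu Yu a) Y (V - Yu - Y) γ := by
    intro Cu a Yu Y haCu hYuY hc hYκ hCO
    have hal : a ∈ l := by
      have : a ∈ (l : Multiset ℕ) := Multiset.mem_of_le haCu (Multiset.mem_cons_self _ _)
      simpa using this
    have hne : V - Yu - Y ≠ 0 := by
      intro h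
      rw [tsub_tsub] at h
      have := Multiset.card_sub hYuY
      rw [h, Multiset.card_zero] at this
      omega
    obtain ⟨h, hm, g, hg, h1, h2⟩ := container (l : Multiset ℕ) V Cu a Yu Y γ κ m hSep hV haCu hYuY
      (hl a hal).1 hYκ (fun Y hY hc => hsum Y hY hc a hal) hne hCO
    exact hcon ⟨Cu, a, Yu, Y, h, g, haCu, hYuY, hc, hm, hg, h1, h2⟩
  obtain ⟨c, hc, hF⟩ := level2 (l : Multiset ℕ) V γ R κ (κ * l.length) m hV hR
    (fun a ha => (hl a (by simpa using ha)).1)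
    (fun Y hY hc a ha => hsum Y hY hc a (by simpa using ha)) hNC l 0 0 a0 hsort (by simp)
    (Multiset.zero_le _) (fun a ha => (hl a ha).2) (by simpa using hcard) (by simp)
  have h1 := D0s_add_Fs 0 0 a0
  obtain ⟨u, hu⟩ : ∃ u, u ∈ V := by
    apply Multiset.exists_mem_of_ne_zero
    intro h; rw [h] at hcard; simp at hcard
  have h3 := (LL_index_le V u hu (hV u hu).1).1
  rw [tsub_zero] at hc
  have h4 : 2 ^ c ≤ m := le_trans (Nat.le_mul_of_pos_right _ (by omega)) hc
  have h5 : c ≤ ℓ := by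
    by_contra h
    have := Nat.pow_le_pow_right (n := 2) (by norm_num) (show ℓ ≤ c by omega)
    omega
  have h6 : γ * R * (c + l.length) ≤ γ * R * (ℓ + l.length) := Nat.mul_le_mul_left _ (by omega)
  omega
end Level2


section Select
open Classical

lemma mexists_le_card {α : Type*} {s : Multiset α} {n : ℕ} (h : n ≤ Multiset.card s) :
    ∃ t ≤ s, Multiset.card t = n := by
  induction s using Quotient.inductionOn with
  | h l =>
    refine ⟨(l.take n : List α), ?_, ?_⟩
    · exact Multiset.coe_le.2 (List.take_sublist _ _).subperm
    · have h' : n ≤ l.length := h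
      rw [Multiset.coe_card, List.length_take]; omega

/-- one-sided minimality -/
def Good (P Q : Multiset ℕ) : Prop :=
  P.sum = Q.sum ∧ ∀ C₁ ≤ P, ∀ Q₁ ≤ Q, C₁.sum = Q₁.sum → Q₁ = 0 ∨ Q₁ = Q

lemma SepM_of_Good {C Q V : Multiset ℕ} {q0 : ℕ} (h : Good C Q) (hV : q0 ::ₘ V ≤ Q) : SepM C V := by
  intro C₁ hC Y hY he
  have hYQ : Y ≤ Q := hY.trans ((Multiset.le_cons_self _ _).trans hV)
  rcases h.2 C₁ hC Y hYQ he with h1 | h1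
  · exact h1
  · exfalso
    have h2 := Multiset.card_le_card hV
    have h3 := Multiset.card_le_card hY
    rw [h1] at h3; simp at h2; omega

lemma SepM_mono {C C' V : Multiset ℕ} (h : SepM C V) (hC : C' ≤ C) : SepM C' V :=
  fun C₁ h1 Y hY he => h C₁ (h1.trans hC) Y hY he

lemma Good_merge {C Q : Multiset ℕ} {x y : ℕ} (h : Good (x ::ₘ y ::ₘ C) Q) :
    Good ((x + y) ::ₘ C) Q := by
  refine ⟨by rw [← h.1]; simp [add_assoc], ?_⟩
  intro C₁ hC₁ Q₁ hQ₁ he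
  by_cases hm : (x + y) ∈ C₁ ∧ C₁.erase (x + y) ≤ C
  · apply h.2 (x ::ₘ y ::ₘ C₁.erase (x + y)) _ Q₁ hQ₁
    · rw [← he]
      conv_rhs => rw [← Multiset.cons_erase hm.1]
      simp [add_assoc]
    · exact Multiset.cons_le_cons _ (Multiset.cons_le_cons _ hm.2)
  · apply h.2 C₁ _ Q₁ hQ₁ he
    have : C₁ ≤ C := by
      by_cases hmem : (x + y) ∈ C₁
      · exfalso; apply hm; refine ⟨hmem, ?_⟩
        have := Multiset.erase_le_erase (x + y) hC₁
        simpa using this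
      · exact (Multiset.le_cons_of_notMem hmem).1 hC₁
    exact this.trans ((Multiset.le_cons_self _ _).trans (Multiset.le_cons_self _ _))

lemma Good_single {P Q : Multiset ℕ} (h : Good P Q) (hQ : ∀ q ∈ Q, 0 < q) : Good {Q.sum} Q := by
  refine ⟨by simp, ?_⟩
  intro C₁ hC₁ Q₁ hQ₁ he
  rcases Multiset.le_singleton.1 hC₁ with h1 | h1
  · left
    rw [h1] at he
    simp only [Multiset.sum_zero] at he
    by_contra hne
    obtain ⟨q, hq⟩ := Multiset.exists_mem_of_ne_zero hne
    have h2 := Multiset.single_le_sum (s := Q₁) (fun x _ => Nat.zero_le x) q hq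
    have h3 := hQ q (Multiset.mem_of_le hQ₁ hq)
    omega
  · exact h.2 P le_rfl Q₁ hQ₁ (by rw [h.1, ← he, h1]; simp)

lemma exists_chunks {P Q : Multiset ℕ} (A : ℕ) (h : Good P Q) (hP : ∀ p ∈ P, 0 < p ∧ p < 2 * A) :
    ∃ C, Good C Q ∧ (∀ p ∈ C, 0 < p ∧ p < 2 * A) ∧
      Multiset.card (C.filter (fun x => ¬ A ≤ x)) ≤ 1 := by
  have hex : ∃ n, ∃ C : Multiset ℕ, Multiset.card C = n ∧ Good C Q ∧ (∀ p ∈ C, 0 < p ∧ p < 2 * A) :=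
    ⟨_, P, rfl, h, hP⟩
  obtain ⟨C, hCn, hG, hC⟩ := Nat.find_spec hex
  refine ⟨C, hG, hC, ?_⟩
  by_contra hcon
  have h2 : 2 ≤ Multiset.card (C.filter (fun x => ¬ A ≤ x)) := by omega
  obtain ⟨T, hT, hTc⟩ := mexists_le_card h2
  obtain ⟨x, y, rfl⟩ := Multiset.card_eq_two.1 hTc
  have hle : ({x, y} : Multiset ℕ) ≤ C := hT.trans (Multiset.filter_le _ _)
  obtain ⟨C', hC'⟩ := Multiset.le_iff_exists_add.1 hle
  have hx : x ∈ C.filter (fun x => ¬ A ≤ x) := Multiset.mem_of_le hT (by simp)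
  have hy : y ∈ C.filter (fun x => ¬ A ≤ x) := Multiset.mem_of_le hT (by simp)
  rw [Multiset.mem_filter] at hx hy
  have hC'' : C = x ::ₘ y ::ₘ C' := by
    rw [hC']; simp [Multiset.insert_eq_cons]
  rw [hC''] at hG
  apply Nat.find_min hex (m := Multiset.card ((x + y) ::ₘ C'))
  · rw [← hCn, hC'']; simp
  · refine ⟨_, rfl, Good_merge hG, ?_⟩
    intro p hp
    rw [Multiset.mem_cons] at hp
    rcases hp with rfl | hp
    · have := (hC x hx.1).1; omega
    · apply hC; rw [hC'']; simp [hp]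

lemma msum_le_mul {A : Multiset ℕ} {b : ℕ} (h : ∀ x ∈ A, x ≤ b) : A.sum ≤ Multiset.card A * b := by
  have := Multiset.sum_le_card_nsmul A b h
  simpa using this

lemma exists_big_chunks {P Q : Multiset ℕ} (A : ℕ) (h : Good P Q) (hP : ∀ p ∈ P, 0 < p ∧ p < 2 * A)
    (hS : 16 * A ≤ Q.sum) :
    ∃ C C', Good C Q ∧ C' ≤ C ∧ (∀ p ∈ C', A ≤ p ∧ p ≤ 2 * A) ∧
      Q.sum ≤ 4 * A * Multiset.card C' := by
  obtain ⟨C, hG, hC, hc⟩ := exists_chunks A h hP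
  refine ⟨C, C.filter (fun x => A ≤ x), hG, Multiset.filter_le _ _, ?_, ?_⟩
  · intro p hp
    rw [Multiset.mem_filter] at hp
    exact ⟨hp.2, (hC p hp.1).2.le⟩
  · have h1 := congrArg Multiset.sum (Multiset.filter_add_not (fun x => A ≤ x) C)
    rw [Multiset.sum_add, hG.1] at h1
    have h2 : (C.filter (fun x => A ≤ x)).sum ≤ Multiset.card (C.filter (fun x => A ≤ x)) * (2 * A) :=
      msum_le_mul (fun x hx => (hC x (Multiset.mem_of_le (Multiset.filter_le _ _) hx)).2.le)
    have h3 : (C.filter (fun x => ¬ A ≤ x)).sum ≤ Multiset.card (C.filter (fun x => ¬ A ≤ x)) * A :=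
      msum_le_mul (fun x hx => by
        have := (Multiset.mem_filter.1 hx).2; omega)
    have h4 : Multiset.card (C.filter (fun x => ¬ A ≤ x)) * A ≤ 1 * A := Nat.mul_le_mul_right _ hc
    nlinarith

lemma pow_R (γ ℓ : ℕ) (h : γ < 2 ^ ℓ) : 4 * γ * 4 ^ (4 * (ℓ + 2)) ≤ 5 ^ (4 * (ℓ + 2)) := by
  have h1 : 2 ^ (ℓ + 2) * 4 ^ (4 * (ℓ + 2)) ≤ 5 ^ (4 * (ℓ + 2)) := by
    rw [pow_mul, pow_mul, ← mul_pow]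
    exact Nat.pow_le_pow_left (by norm_num) _
  refine le_trans (Nat.mul_le_mul_right _ ?_) h1
  rw [pow_add]; omega

/-- The fingerprint conclusion. -/
def HasCont (V : Multiset ℕ) (J0 X m γ : ℕ) : Prop :=
  ∃ (Cu : Multiset ℕ) (a : ℕ) (Yu Y : Multiset ℕ) (h g : ℕ),
    Multiset.card Cu ≤ J0 ∧ (∀ x ∈ Cu, x ≤ X) ∧ a ≤ X ∧
    Yu + Y ≤ V ∧ Multiset.card (Yu + Y) ≤ J0 ∧ h ≤ m ∧ g ≤ γ ∧
    (EN Cu a Yu Y h g).card ≤ 24 * g ∧ ∀ t ∈ V - Yu - Y, t ∈ EN Cu a Yu Y h g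

lemma selection {P Q V : Multiset ℕ} {q0 : ℕ} (m ℓ J0 γ R A : ℕ) (hm : 0 < m) (hG : Good P Q)
    (hP : ∀ p ∈ P, 0 < p ∧ p ≤ m) (hQ : ∀ p ∈ Q, 0 < p ∧ p ≤ m)
    (hV : q0 ::ₘ V ≤ Q) (hVS : ∀ q ∈ V, 8 * J0 * q ≤ Q.sum) (hVc : J0 < Multiset.card V)
    (hmℓ : m < 2 ^ ℓ) (hR : R = 4 * (ℓ + 2)) (hA : A = (4 * R + 1) * m)
    (hJ0 : 16 * R * (ℓ + 1) ≤ J0) (hγJ : 64 * A < γ * J0) (hγ : γ ≤ m) :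
    HasCont V J0 (16 * A) m γ := by
  have hVQ : V ≤ Q := (Multiset.le_cons_self _ _).trans hV
  have hVpos : ∀ t ∈ V, 0 < t ∧ t ≤ m := fun t ht => hQ t (Multiset.mem_of_le hVQ ht)
  have hRp : 4 * γ * 4 ^ R ≤ 5 ^ R := by rw [hR]; exact pow_R γ ℓ (by omega)
  have hR8 : 8 ≤ R := by omega
  have hAm : 0 < A := by rw [hA]; positivity
  have hJR : 16 * R ≤ J0 := by nlinarith
  have hJpos : 0 < J0 := by omega
  -- it suffices to provide a list of chunks
  have main : ∀ (l : List ℕ) (κ a0 : ℕ), SepM (l : Multiset ℕ) V → (∀ a ∈ l, 0 < a ∧ a ≤ a0) →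
      l.Pairwise (· ≥ ·) → (∀ Y ≤ V, Multiset.card Y ≤ κ → ∀ a ∈ l, Y.sum ≤ a) →
      κ * l.length ≤ J0 → 0 < κ → a0 + γ * R * (ℓ + l.length) < γ * κ * l.length → a0 ≤ 16 * A →
      HasCont V J0 (16 * A) m γ := by
    intro l κ a0 h1 h2 h3 h4 h5 h5' h6 h7
    obtain ⟨Cu, a, Yu, Y, h, g, g1, g2, g3, g4, g5, g6, g7⟩ :=
      exists_container l V γ R κ m a0 ℓ h1 hVpos hRp h2 h3 hmℓ h4 (by omega) h6
    have g8 := Multiset.card_le_card g1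
    simp only [Multiset.card_cons, Multiset.coe_card] at g8
    refine ⟨Cu, a, Yu, Y, h, g, ?_, ?_, ?_, g2, by omega, g4, g5, g6, g7⟩
    · have : l.length ≤ κ * l.length := Nat.le_mul_of_pos_left _ h5'
      omega
    · intro x hx
      have : x ∈ l := by
        have := Multiset.mem_of_le g1 (Multiset.mem_cons_of_mem hx)
        simpa using this
      exact (h2 x this).2.trans h7
    · have : a ∈ l := by
        have := Multiset.mem_of_le g1 (Multiset.mem_cons_self a Cu)
        simpa using this
      exact (h2 a this).2.trans h7
  rcases Nat.lt_or_ge Q.sum (16 * A) with hS | hS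
  · have hSpos : 0 < Q.sum := by
      obtain ⟨u, hu⟩ : ∃ u, u ∈ V := by
        apply Multiset.exists_mem_of_ne_zero
        intro h; rw [h] at hVc; simp at hVc
      have := Multiset.single_le_sum (s := V) (fun x _ => Nat.zero_le x) u hu
      have h2 := msum_le hVQ
      have h3 := (hVpos u hu).1
      omega
    apply main [Q.sum] J0 Q.sum
    · exact SepM_of_Good (Good_single hG (fun q hq => (hQ q hq).1)) hV
    · intro a ha
      simp at ha; subst ha
      exact ⟨hSpos, le_rfl⟩
    · simp
    · intro Y hY _ a ha
      simp at ha; subst ha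
      exact msum_le (hY.trans hVQ)
    · simp
    · exact hJpos
    · simp only [List.length_cons, List.length_nil, zero_add, mul_one]
      have : γ * (16 * R * (ℓ + 1)) ≤ γ * J0 := Nat.mul_le_mul_left _ hJ0
      have h2 : γ * (16 * R * (ℓ + 1)) = 16 * (γ * R * (ℓ + 1)) := by ring
      omega
    · exact hS.le
  · obtain ⟨C, C', hGC, hC'C, hC', hSC⟩ := exists_big_chunks A hG (fun p hp => ⟨(hP p hp).1, by
      have := (hP p hp).2
      rw [hA]; nlinarith⟩) hS
    have hSep := SepM_mono (SepM_of_Good hGC hV) hC'C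
    set Nm := Multiset.card C' with hNm
    have hNpos : 4 ≤ Nm := by
      by_contra h
      have : 4 * A * Nm ≤ 4 * A * 3 := Nat.mul_le_mul_left _ (by omega)
      omega
    have main2 : ∀ κ N, N ≤ Nm → 4 * R ≤ κ → J0 ≤ 2 * (κ * N) → κ * N ≤ J0 →
        (∀ Y ≤ V, Multiset.card Y ≤ κ → Y.sum ≤ A) → HasCont V J0 (16 * A) m γ := by
      intro κ N h1 h2 h3 h4 h5
      set l := (C'.sort (· ≥ ·)).take N with hl
      have hlen : l.length = N := by
        rw [hl, List.length_take, Multiset.length_sort]; omega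
      have hlC : (l : Multiset ℕ) ≤ C' := by
        have : ((C'.sort (· ≥ ·) : List ℕ) : Multiset ℕ) = C' := Multiset.sort_eq C' _
        rw [← this, Multiset.coe_le]
        exact (List.take_sublist _ _).subperm
      have hlm : ∀ a ∈ l, a ∈ C' := fun a ha => Multiset.mem_of_le hlC (by simpa using ha)
      apply main l κ (2 * A) (SepM_mono hSep hlC)
      · intro a ha
        have := hC' a (hlm a ha)
        omega
      · exact (Multiset.pairwise_sort C' _).sublist (List.take_sublist _ _)
      · intro Y hY hYc a ha
        exact (h5 Y hY hYc).trans (hC' a (hlm a ha)).1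
      · rw [hlen]; exact h4
      · omega
      · rw [hlen]
        have e1 : γ * (16 * R * (ℓ + 1)) ≤ γ * J0 := Nat.mul_le_mul_left _ hJ0
        have e2 : γ * (16 * R * (ℓ + 1)) = 16 * (γ * R * ℓ) + 16 * (γ * R) := by ring
        have e3 : γ * J0 ≤ γ * (2 * (κ * N)) := Nat.mul_le_mul_left _ h3
        have e4 : γ * (2 * (κ * N)) = 2 * (γ * κ * N) := by ring
        have e5 : γ * N * (4 * R) ≤ γ * N * κ := Nat.mul_le_mul_left _ h2
        have e6 : γ * N * (4 * R) = 4 * (γ * R * N) := by ring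
        have e7 : γ * N * κ = γ * κ * N := by ring
        have e8 : γ * R * (ℓ + N) = γ * R * ℓ + γ * R * N := by ring
        omega
      · omega
    rcases Nat.lt_or_ge (Nm * (4 * R)) J0 with hc | hc
    · -- few chunks
      have k1 : J0 / Nm * Nm ≤ J0 := Nat.div_mul_le_self _ _
      have k2 : J0 < (J0 / Nm + 1) * Nm := by
        have := Nat.lt_mul_div_succ J0 (show 0 < Nm by omega)
        rw [mul_comm]; exact this
      apply main2 (J0 / Nm) Nm le_rfl
      · rw [Nat.le_div_iff_mul_le (by omega)]; nlinarith
      · have k3 : (J0 / Nm + 1) * Nm = J0 / Nm * Nm + Nm := by ring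
        nlinarith
      · exact k1
      · intro Y hY hYc
        have y1 : (Y.map (fun q => 8 * J0 * q)).sum ≤ Multiset.card Y * Q.sum := by
          have := Multiset.sum_le_card_nsmul (Y.map (fun q => 8 * J0 * q)) Q.sum (by
            intro x hx
            obtain ⟨q, hq, rfl⟩ := Multiset.mem_map.1 hx
            exact hVS q (Multiset.mem_of_le hY hq))
          simpa using this
        rw [Multiset.sum_map_mul_left, Multiset.map_id'] at y1
        have y2 : Multiset.card Y * Q.sum ≤ J0 / Nm * Q.sum := Nat.mul_le_mul_right _ hYc
        have y3 : J0 / Nm * Q.sum ≤ J0 / Nm * (4 * A * Nm) := Nat.mul_le_mul_left _ hSC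
        have y4 : J0 / Nm * (4 * A * Nm) = 4 * A * (J0 / Nm * Nm) := by ring
        have y5 : 4 * A * (J0 / Nm * Nm) ≤ 4 * A * J0 := Nat.mul_le_mul_left _ k1
        have y6 : J0 * (8 * Y.sum) ≤ J0 * (4 * A) := by nlinarith
        have := Nat.le_of_mul_le_mul_left y6 hJpos
        omega
    · have k1 : J0 / (4 * R) * (4 * R) ≤ J0 := Nat.div_mul_le_self _ _
      have k2 : J0 < (J0 / (4 * R) + 1) * (4 * R) := by
        have := Nat.lt_mul_div_succ J0 (show 0 < 4 * R by omega)
        rw [mul_comm]; exact this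
      apply main2 (4 * R) (J0 / (4 * R))
      · apply Nat.div_le_of_le_mul; rw [mul_comm]; exact hc
      · exact le_rfl
      · have k3 : (J0 / (4 * R) + 1) * (4 * R) = 4 * R * (J0 / (4 * R)) + 4 * R := by ring
        omega
      · rw [mul_comm]; exact k1
      · intro Y hY hYc
        have y1 : Y.sum ≤ Multiset.card Y * m :=
          msum_le_mul (fun x hx => (hVpos x (Multiset.mem_of_le hY hx)).2)
        have y2 : Multiset.card Y * m ≤ 4 * R * m := Nat.mul_le_mul_right _ hYc
        rw [hA]; nlinarith
end Select


section Apps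
open Classical

/-- elements with multiplicity at least `K` -/
noncomputable def highSet (Q : Multiset ℕ) (K : ℕ) : Finset ℕ := Q.toFinset.filter (fun q => K ≤ Q.count q)

/-- `K` copies of every element of a finset -/
def copies (W : Finset ℕ) (K : ℕ) : Multiset ℕ := K • W.val

lemma count_copies (W : Finset ℕ) (K q : ℕ) : (copies W K).count q = if q ∈ W then K else 0 := by
  unfold copies
  rw [Multiset.count_nsmul]
  by_cases h : q ∈ W
  · rw [if_pos h, Multiset.count_eq_one_of_mem W.nodup h, mul_one]
  · rw [if_neg h, Multiset.count_eq_zero_of_notMem h, mul_zero]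

lemma copies_le {Q : Multiset ℕ} {W : Finset ℕ} {K : ℕ} (h : ∀ q ∈ W, K ≤ Q.count q) :
    copies W K ≤ Q := by
  rw [Multiset.le_iff_count]
  intro q
  rw [count_copies]
  split_ifs with hq
  · exact h q hq
  · exact Nat.zero_le _

lemma sum_copies (W : Finset ℕ) (K : ℕ) : (copies W K).sum = K * ∑ q ∈ W, q := by
  unfold copies
  rw [Multiset.sum_nsmul, smul_eq_mul, Finset.sum_eq_multiset_sum, Multiset.map_id']

/-- few elements are large -/
lemma few_large {Q : Multiset ℕ} {W : Finset ℕ} {K J : ℕ} (h : ∀ q ∈ W, K ≤ Q.count q)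
    (hJ : ∀ q ∈ W, Q.sum < J * q) (hK : 0 < K) : K * W.card ≤ J := by
  rcases W.eq_empty_or_nonempty with rfl | hne
  · simp
  have h1 := msum_le (copies_le h)
  rw [sum_copies] at h1
  have h2 : W.card * Q.sum ≤ ∑ q ∈ W, J * q := by
    have := Finset.card_nsmul_le_sum W (fun q => J * q) Q.sum (fun q hq => (hJ q hq).le)
    simpa using this
  rw [← Finset.mul_sum] at h2
  have hS : 0 < Q.sum := by
    by_contra hS
    obtain ⟨q, hq⟩ := hne
    have h3 := hJ q hq
    have h5 : q ∈ Q := Multiset.count_pos.1 (lt_of_lt_of_le hK (h q hq))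
    have h6 := Multiset.single_le_sum (s := Q) (fun x _ => Nat.zero_le x) q h5
    have h7 : q = 0 := by omega
    subst h7; simp at h3
  have h3 : K * W.card * Q.sum ≤ J * Q.sum := by
    calc K * W.card * Q.sum = K * (W.card * Q.sum) := by ring
      _ ≤ K * (J * ∑ q ∈ W, q) := Nat.mul_le_mul_left _ h2
      _ = J * (K * ∑ q ∈ W, q) := by ring
      _ ≤ J * Q.sum := Nat.mul_le_mul_left _ h1
  exact Nat.le_of_mul_le_mul_right h3 hS

lemma card_copies (W : Finset ℕ) (K : ℕ) : Multiset.card (copies W K) = K * W.card := by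
  simp [copies]

lemma app1 {P Q : Multiset ℕ} (m ℓ K B : ℕ) (hm : 0 < m) (hG : Good P Q)
    (hP : ∀ p ∈ P, 0 < p ∧ p ≤ m) (hQ : ∀ p ∈ Q, 0 < p ∧ p ≤ m)
    (hmℓ : m < 2 ^ ℓ) (hℓ : 1 ≤ ℓ) (hK : 0 < K) (hB : 64 ≤ B) (hB2 : 2 ^ 15 * ℓ ^ 2 ≤ B)
    (hB3 : 2 ^ 25 * ℓ * m ≤ K * B ^ 2) : (highSet Q K).card ≤ B := by
  by_contra hcon
  push Not at hcon
  set W := highSet Q K with hW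
  set v := W.card with hv
  have hWQ : ∀ q ∈ W, q ∈ Q ∧ K ≤ Q.count q := by
    intro q hq
    rw [hW, highSet, Finset.mem_filter, Multiset.mem_toFinset] at hq
    exact hq
  obtain ⟨q0, hq0⟩ : W.Nonempty := Finset.card_pos.1 (by omega)
  set J0 := K * v / 32 with hJ0
  set γ := v / 64 with hγ
  set Wb := (W.erase q0).filter (fun q => Q.sum < 8 * J0 * q) with hWb
  set Ws := (W.erase q0).filter (fun q => ¬ Q.sum < 8 * J0 * q) with hWs
  have hsplit : Wb.card + Ws.card = v - 1 := by
    rw [hWb, hWs, Finset.card_filter_add_card_filter_not, Finset.card_erase_of_mem hq0]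
  have hKv : v ≤ K * v := Nat.le_mul_of_pos_left _ hK
  have hJ0pos : 0 < J0 := by omega
  have hbig : K * Wb.card ≤ 8 * J0 := by
    apply few_large (Q := Q) _ _ hK
    · intro q hq
      exact (hWQ q (Finset.mem_of_mem_erase (Finset.mem_filter.1 hq).1)).2
    · intro q hq; exact (Finset.mem_filter.1 hq).2
  have hbig2 : 4 * Wb.card ≤ v := by
    have h1 : K * (4 * Wb.card) ≤ K * v := by
      calc K * (4 * Wb.card) = 4 * (K * Wb.card) := by ring
        _ ≤ 4 * (8 * J0) := by omega
        _ ≤ K * v := by omega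
    exact Nat.le_of_mul_le_mul_left h1 hK
  have hWs2 : v ≤ 2 * Ws.card := by omega
  have hcons : q0 ::ₘ copies Ws K ≤ Q := by
    rw [Multiset.le_iff_count]
    intro q
    rw [Multiset.count_cons, count_copies]
    by_cases hq : q = q0
    · subst hq
      have : q ∉ Ws := by intro h; simp [hWs] at h
      have h2 := (hWQ q hq0).2
      simp [this]; exact Multiset.count_pos.2 (hWQ q hq0).1
    · rw [if_neg hq]
      split_ifs with h
      · exact (hWQ q (Finset.mem_of_mem_erase (Finset.mem_filter.1 h).1)).2
      · omega
  have hA1 : (4 * (4 * (ℓ + 2)) + 1) * m ≤ 49 * ℓ * m := Nat.mul_le_mul_right _ (by omega)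
  have hvm : v ≤ m := by
    have : W ⊆ Finset.Icc 1 m := by
      intro q hq
      have := hQ q (hWQ q hq).1
      rw [Finset.mem_Icc]; omega
    have := Finset.card_le_card this
    simpa using this
  have hWsV : K * v ≤ 2 * (K * Ws.card) := by
    calc K * v ≤ K * (2 * Ws.card) := Nat.mul_le_mul_left _ hWs2
      _ = _ := by ring
  obtain ⟨Cu, a, Yu, Y, h, g, _, _, _, h4, h5, _, h7, h8, h9⟩ :=
    selection (V := copies Ws K) (q0 := q0) m ℓ J0 γ (4 * (ℓ + 2)) ((4 * (4 * (ℓ + 2)) + 1) * m)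
      hm hG hP hQ hcons
      (by
        intro q hq
        have : q ∈ Ws := by
          by_contra hc
          have := count_copies Ws K q
          rw [if_neg hc] at this
          have := Multiset.count_pos.2 hq
          omega
        have := (Finset.mem_filter.1 this).2
        omega)
      (by
        rw [card_copies]; omega)
      hmℓ rfl rfl
      (by
        have e1 : 16 * (4 * (ℓ + 2)) * (ℓ + 1) ≤ 2 ^ 9 * ℓ ^ 2 := by nlinarith
        have : 2 ^ 15 * ℓ ^ 2 = 64 * (2 ^ 9 * ℓ ^ 2) := by ring
        omega)
      (by
        have e1 : v ≤ 128 * γ := by omega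
        have e2 : K * v ≤ 64 * J0 := by omega
        have e3 : v * (K * v) ≤ (128 * γ) * (64 * J0) := Nat.mul_le_mul e1 e2
        have e4 : K * B ^ 2 < v * (K * v) := by
          have : B ^ 2 < v ^ 2 := Nat.pow_lt_pow_left hcon (by norm_num)
          calc K * B ^ 2 < K * v ^ 2 := Nat.mul_lt_mul_of_pos_left this hK
            _ = _ := by ring
        have e5 : (128 * γ) * (64 * J0) = 2 ^ 13 * (γ * J0) := by ring
        have e6 : 2 ^ 25 * ℓ * m = 2 ^ 13 * (64 * (64 * (ℓ * m))) := by ring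
        have e7 : 49 * ℓ * m = 49 * (ℓ * m) := by ring
        omega)
      (by omega)
  -- count remaining
  have hrem : Ws.filter (fun q => Multiset.count q (Yu + Y) < K) ⊆ EN Cu a Yu Y h g := by
    intro q hq
    rw [Finset.mem_filter] at hq
    apply h9
    rw [tsub_tsub]
    apply Multiset.count_pos.1
    rw [Multiset.count_sub, count_copies, if_pos hq.1]; omega
  have hrem2 := Finset.card_le_card hrem
  have hused : K * (Ws.filter (fun q => ¬ Multiset.count q (Yu + Y) < K)).card ≤ J0 := by
    rw [← card_copies]
    refine le_trans (Multiset.card_le_card ?_) h5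
    apply copies_le
    intro q hq
    have := (Finset.mem_filter.1 hq).2
    omega
  have hused2 : 32 * (Ws.filter (fun q => ¬ Multiset.count q (Yu + Y) < K)).card ≤ v := by
    have h1 : K * (32 * (Ws.filter (fun q => ¬ Multiset.count q (Yu + Y) < K)).card) ≤ K * v := by
      calc _ = 32 * (K * (Ws.filter (fun q => ¬ Multiset.count q (Yu + Y) < K)).card) := by ring
        _ ≤ 32 * J0 := by omega
        _ ≤ K * v := by omega
    exact Nat.le_of_mul_le_mul_left h1 hK
  have hsp := Finset.card_filter_add_card_filter_not (s := Ws) (fun q => Multiset.count q (Yu + Y) < K)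
  omega

lemma app2 {P Q : Multiset ℕ} (m ℓ J0 γ R A : ℕ) (hm : 0 < m) (hG : Good P Q)
    (hP : ∀ p ∈ P, 0 < p ∧ p ≤ m) (hQ : ∀ p ∈ Q, 0 < p ∧ p ≤ m)
    (hmℓ : m < 2 ^ ℓ) (hR : R = 4 * (ℓ + 2)) (hA : A = (4 * R + 1) * m)
    (hJ0 : 16 * R * (ℓ + 1) ≤ J0) (hγJ : 64 * A < γ * J0) (hγ : γ ≤ m) :
    ∃ (Cu : Multiset ℕ) (a : ℕ) (Yu Y : Multiset ℕ) (h g : ℕ) (Z : Multiset ℕ),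
      Multiset.card Cu ≤ J0 ∧ (∀ x ∈ Cu, x ≤ 16 * A) ∧ a ≤ 16 * A ∧
      (∀ x ∈ Yu, x ≤ m) ∧ (∀ x ∈ Y, x ≤ m) ∧ Multiset.card (Yu + Y) ≤ J0 ∧ h ≤ m ∧ g ≤ γ ∧
      (EN Cu a Yu Y h g).card ≤ 24 * g ∧ (∀ x ∈ Z, x ≤ m) ∧ Multiset.card Z ≤ 10 * J0 ∧
      Q.toFinset ⊆ Z.toFinset ∪ EN Cu a Yu Y h g := by
  have hJpos : 0 < J0 := by
    rcases Nat.eq_zero_or_pos J0 with h | h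
    · rw [h] at hγJ; simp at hγJ
    · exact h
  have EN0 : EN 0 0 0 0 0 0 = ∅ := by simp [EN]
  rcases Q.empty_or_exists_mem with rfl | ⟨q0, hq0⟩
  · exact ⟨0, 0, 0, 0, 0, 0, 0, by simp [EN0]⟩
  set Wb := (Q.toFinset.erase q0).filter (fun q => Q.sum < 8 * J0 * q) with hWb
  set Ws := (Q.toFinset.erase q0).filter (fun q => ¬ Q.sum < 8 * J0 * q) with hWs
  have hmem : ∀ q ∈ Q, q = q0 ∨ q ∈ Wb ∨ q ∈ Ws := by
    intro q hq
    by_cases h1 : q = q0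
    · exact Or.inl h1
    · right
      have : q ∈ Q.toFinset.erase q0 := by simp [h1, hq]
      by_cases h2 : Q.sum < 8 * J0 * q
      · left; exact Finset.mem_filter.2 ⟨this, h2⟩
      · right; exact Finset.mem_filter.2 ⟨this, h2⟩
  have hWbQ : ∀ q ∈ Wb, q ∈ Q := by
    intro q hq
    have := Finset.mem_of_mem_erase (Finset.mem_filter.1 hq).1
    simpa using this
  have hWsQ : ∀ q ∈ Ws, q ∈ Q := by
    intro q hq
    have := Finset.mem_of_mem_erase (Finset.mem_filter.1 hq).1
    simpa using this
  have hbig : 1 * Wb.card ≤ 8 * J0 := by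
    apply few_large (Q := Q) _ _ (by norm_num)
    · intro q hq
      exact Multiset.count_pos.2 (hWbQ q hq)
    · intro q hq; exact (Finset.mem_filter.1 hq).2
  rcases Nat.lt_or_ge J0 Ws.card with hc | hc
  · have hcons : q0 ::ₘ Ws.val ≤ Q := by
      have hnd : (q0 ::ₘ Ws.val).Nodup := by
        rw [Multiset.nodup_cons]
        refine ⟨?_, Ws.nodup⟩
        intro h
        have h' : q0 ∈ Ws := h
        simp [hWs] at h'
      rw [Multiset.le_iff_subset hnd]
      intro q hq
      rw [Multiset.mem_cons] at hq
      rcases hq with rfl | hq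
      · exact hq0
      · exact hWsQ q hq
    obtain ⟨Cu, a, Yu, Y, h, g, h1, h2, h3, h4, h5, h6, h7, h8, h9⟩ :=
      selection (V := Ws.val) (q0 := q0) m ℓ J0 γ R A hm hG hP hQ hcons
        (by
          intro q hq
          have := (Finset.mem_filter.1 (show q ∈ Ws from hq)).2
          omega) hc hmℓ hR hA hJ0 hγJ hγ
    have hYm : ∀ x ∈ Yu + Y, x ≤ m := fun x hx => (hQ x (hWsQ x (Multiset.mem_of_le h4 hx))).2
    refine ⟨Cu, a, Yu, Y, h, g, q0 ::ₘ (Wb.val + (Yu + Y)), h1, h2, h3,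
      fun x hx => hYm x (by simp [hx]), fun x hx => hYm x (by simp [hx]), h5, h6, h7, h8, ?_, ?_, ?_⟩
    · intro x hx
      rw [Multiset.mem_cons, Multiset.mem_add] at hx
      rcases hx with rfl | hx | hx
      · exact (hQ x hq0).2
      · exact (hQ x (hWbQ x hx)).2
      · exact hYm x hx
    · rw [Multiset.card_cons, Multiset.card_add, Finset.card_val]; omega
    · intro q hq
      rw [Multiset.mem_toFinset] at hq
      rw [Finset.mem_union, Multiset.mem_toFinset, Multiset.mem_cons, Multiset.mem_add]
      rcases hmem q hq with h | h | h
      · left; left; exact h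
      · left; right; left; exact h
      · by_cases hy : q ∈ Yu + Y
        · left; right; right; exact hy
        · right
          apply h9
          rw [tsub_tsub]
          apply Multiset.count_pos.1
          rw [Multiset.count_sub, Multiset.count_eq_zero_of_notMem hy]
          exact Multiset.count_pos.2 h
  · refine ⟨0, 0, 0, 0, 0, 0, q0 ::ₘ (Wb.val + Ws.val), by simp, by simp, by simp, by simp, by simp,
      by simp, by simp, by simp, by simp [EN0], ?_, ?_, ?_⟩
    · intro x hx
      rw [Multiset.mem_cons, Multiset.mem_add] at hx
      rcases hx with rfl | hx | hx
      · exact (hQ x hq0).2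
      · exact (hQ x (hWbQ x hx)).2
      · exact (hQ x (hWsQ x hx)).2
    · rw [Multiset.card_cons, Multiset.card_add, Finset.card_val, Finset.card_val]; omega
    · intro q hq
      rw [Multiset.mem_toFinset] at hq
      rw [Finset.mem_union, Multiset.mem_toFinset, Multiset.mem_cons, Multiset.mem_add]
      left; exact hmem q hq

/-- multiplicities are bounded -/
lemma count_bound {P Q : Multiset ℕ} (m : ℕ) (hG : Good P Q)
    (hP : ∀ p ∈ P, 0 < p ∧ p ≤ m) (hQ : ∀ p ∈ Q, 0 < p ∧ p ≤ m) (q : ℕ) :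
    Q.count q ≤ 2 * m ^ 2 := by
  by_cases hq : q ∈ Q
  swap
  · rw [Multiset.count_eq_zero_of_notMem hq]; omega
  have hq' := hQ q hq
  rcases Nat.lt_or_ge (Multiset.card P) (2 * q - 1) with hc | hc
  · have h1 : P.sum ≤ Multiset.card P * m := msum_le_mul (fun x hx => (hP x hx).2)
    have h2 : Multiset.card P * m ≤ 2 * m * m := Nat.mul_le_mul_right _ (by omega)
    have h3 : Multiset.card Q • 1 ≤ Q.sum := Multiset.card_nsmul_le_sum (fun x hx => (hQ x hx).1)
    have h4 := Multiset.count_le_card q Q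
    rw [hG.1] at h1
    simp at h3
    nlinarith
  · obtain ⟨T, hT, hTc, hTd⟩ := Int.erdos_ginzburg_ziv (n := q) (s := P.toEnumFinset)
      (fun x => ((x.1 : ℕ) : ℤ)) (by simpa using hc)
    have hP₁ : T.1.map Prod.fst ≤ P := Multiset.map_fst_le_of_subset_toEnumFinset hT
    set P₁ := T.1.map Prod.fst with hP₁def
    have hsum : ((P₁.sum : ℕ) : ℤ) = ∑ x ∈ T, ((x.1 : ℕ) : ℤ) := by
      rw [← Nat.cast_sum]; rfl
    rw [← hsum] at hTd
    have hd : q ∣ P₁.sum := by exact_mod_cast hTd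
    obtain ⟨j, hj⟩ := hd
    have hcard : Multiset.card P₁ = q := by rw [hP₁def, Multiset.card_map]; exact hTc
    have h1 : P₁.sum ≤ Multiset.card P₁ * m :=
      msum_le_mul (fun x hx => (hP x (Multiset.mem_of_le hP₁ hx)).2)
    rw [hcard, hj] at h1
    have hjm : j ≤ m := Nat.le_of_mul_le_mul_left h1 hq'.1
    have hjpos : 0 < j := by
      have h2 : Multiset.card P₁ • 1 ≤ P₁.sum :=
        Multiset.card_nsmul_le_sum (fun x hx => (hP x (Multiset.mem_of_le hP₁ hx)).1)
      rw [hcard, hj] at h2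
      rcases Nat.eq_zero_or_pos j with h | h
      · rw [h] at h2; simp at h2; omega
      · exact h
    by_contra hcon
    push Not at hcon
    have hmm : m ≤ 2 * m ^ 2 := by nlinarith
    have hrep : Multiset.replicate j q ≤ Q := by
      rw [← Multiset.le_count_iff_replicate_le]; omega
    rcases hG.2 P₁ hP₁ _ hrep (by rw [hj, Multiset.sum_replicate, smul_eq_mul, mul_comm]) with h | h
    · have := congrArg Multiset.card h
      simp at this; omega
    · have := congrArg (Multiset.count q) h
      rw [Multiset.count_replicate_self] at this
      omega
end Apps


section Counting
open Classical

/-- multisets of bounded size -/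
noncomputable def MS (X : ℕ) : ℕ → Finset (Multiset ℕ)
  | 0 => {0}
  | j + 1 => MS X j ∪ (Finset.range (X + 1) ×ˢ MS X j).image (fun p => p.1 ::ₘ p.2)

lemma MS_card (X j : ℕ) : (MS X j).card ≤ (X + 2) ^ j := by
  induction j with
  | zero => simp [MS]
  | succ j ih =>
    rw [MS]
    refine (Finset.card_union_le _ _).trans ?_
    have h1 := Finset.card_image_le (s := Finset.range (X + 1) ×ˢ MS X j)
      (f := fun p : ℕ × Multiset ℕ => p.1 ::ₘ p.2)
    rw [Finset.card_product, Finset.card_range] at h1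
    rw [pow_succ]
    nlinarith

lemma mem_MS (X j : ℕ) : ∀ Q : Multiset ℕ, Multiset.card Q ≤ j → (∀ x ∈ Q, x ≤ X) → Q ∈ MS X j := by
  induction j with
  | zero =>
    intro Q h _
    have : Q = 0 := by rw [← Multiset.card_eq_zero]; omega
    simp [MS, this]
  | succ j ih =>
    intro Q h hx
    rw [MS, Finset.mem_union]
    rcases Q.empty_or_exists_mem with rfl | ⟨q, hq⟩
    · left; exact ih 0 (by simp) (by simp)
    · right
      rw [Finset.mem_image]
      refine ⟨(q, Q.erase q), ?_, Multiset.cons_erase hq⟩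
      rw [Finset.mem_product, Finset.mem_range]
      refine ⟨by have := hx q hq; simp; omega, ih _ ?_ ?_⟩
      · rw [Multiset.card_erase_of_mem hq]; simp only [Nat.pred_eq_sub_one]; omega
      · intro x hx'; exact hx x (Multiset.mem_of_mem_erase hx')

/-- multisets with few distinct elements -/
noncomputable def HS (X c : ℕ) : ℕ → Finset (Multiset ℕ)
  | 0 => {0}
  | v + 1 => HS X c v ∪ ((Finset.range (X + 1) ×ˢ Finset.range (c + 1)) ×ˢ HS X c v).image
      (fun p => Multiset.replicate p.1.2 p.1.1 + p.2)

lemma HS_card (X c v : ℕ) : (HS X c v).card ≤ (1 + (X + 1) * (c + 1)) ^ v := by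
  induction v with
  | zero => simp [HS]
  | succ v ih =>
    rw [HS]
    refine (Finset.card_union_le _ _).trans ?_
    have h1 := Finset.card_image_le (s := (Finset.range (X + 1) ×ˢ Finset.range (c + 1)) ×ˢ HS X c v)
      (f := fun p : (ℕ × ℕ) × Multiset ℕ => Multiset.replicate p.1.2 p.1.1 + p.2)
    rw [Finset.card_product, Finset.card_product, Finset.card_range, Finset.card_range] at h1
    rw [pow_succ]
    have h2 : (X + 1) * (c + 1) * (HS X c v).card ≤
      (X + 1) * (c + 1) * (1 + (X + 1) * (c + 1)) ^ v := Nat.mul_le_mul_left _ ih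
    calc _ ≤ (1 + (X + 1) * (c + 1)) ^ v + (X + 1) * (c + 1) * (1 + (X + 1) * (c + 1)) ^ v := by omega
      _ = _ := by ring

lemma mem_HS (X c v : ℕ) : ∀ Q : Multiset ℕ, Q.toFinset.card ≤ v → (∀ x ∈ Q, x ≤ X) →
    (∀ x, Q.count x ≤ c) → Q ∈ HS X c v := by
  induction v with
  | zero =>
    intro Q h _ _
    have : Q = 0 := by
      rw [← Multiset.toFinset_eq_empty, ← Finset.card_eq_zero]; omega
    simp [HS, this]
  | succ v ih =>
    intro Q h hx hc
    rw [HS, Finset.mem_union]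
    rcases Q.empty_or_exists_mem with rfl | ⟨q, hq⟩
    · left; exact ih 0 (by simp) (by simp) (by simp)
    · right
      rw [Finset.mem_image]
      refine ⟨((q, Q.count q), Q.filter (fun x => ¬ q = x)), ?_, ?_⟩
      · rw [Finset.mem_product, Finset.mem_product, Finset.mem_range, Finset.mem_range]
        refine ⟨⟨by have := hx q hq; simp; omega, by have := hc q; simp; omega⟩, ih _ ?_ ?_ ?_⟩
        · show (Q.filter (fun x => ¬ q = x)).toFinset.card ≤ v
          have : (Q.filter (fun x => ¬ q = x)).toFinset ⊆ Q.toFinset.erase q := by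
            intro x hx'
            simp only [Multiset.mem_toFinset, Multiset.mem_filter, Finset.mem_erase] at hx' ⊢
            exact ⟨fun h => hx'.2 h.symm, hx'.1⟩
          have := Finset.card_le_card this
          rw [Finset.card_erase_of_mem (Multiset.mem_toFinset.2 hq)] at this
          omega
        · intro x hx'; exact hx x (Multiset.mem_filter.1 hx').1
        · intro x; exact (Multiset.count_le_of_le _ (Multiset.filter_le _ _)).trans (hc x)
      · simp only
        have := Multiset.filter_add_not (fun x => q = x) Q
        rw [Multiset.filter_eq] at this
        exact this

/-- family of containers -/
noncomputable def famC (X J0 M : ℕ) : Finset (Finset ℕ) :=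
  (((MS X J0 ×ˢ MS X J0) ×ˢ (MS X J0 ×ˢ MS X (10 * J0))) ×ˢ
    ((Finset.range (X + 1) ×ˢ Finset.range (X + 1)) ×ˢ Finset.range (X + 1))).image
    (fun p => p.1.2.2.toFinset ∪ EN p.1.1.1 p.2.1.1 p.1.1.2 p.1.2.1 p.2.1.2 p.2.2)
  |>.filter (fun U => U.card ≤ M)

lemma famC_card (X J0 M : ℕ) : (famC X J0 M).card ≤ (X + 2) ^ (13 * J0 + 3) := by
  refine (Finset.card_filter_le _ _).trans (Finset.card_image_le.trans ?_)
  simp only [Finset.card_product, Finset.card_range]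
  have h1 := MS_card X J0
  have h2 := MS_card X (10 * J0)
  calc _ ≤ (X + 2) ^ J0 * (X + 2) ^ J0 * ((X + 2) ^ J0 * (X + 2) ^ (10 * J0)) *
        ((X + 2) * (X + 2) * (X + 2)) := by gcongr <;> omega
    _ = _ := by ring

lemma small_subsets (U : Finset ℕ) (D M T : ℕ) (hT : 0 < T) (hU : U.card ≤ M) :
    ((U.powerset.filter (fun s => s.card ≤ D)).card : ℝ) ≤ (T : ℝ) ^ D * (1 + 1 / (T : ℝ)) ^ M := by
  have hT' : (1 : ℝ) ≤ T := by exact_mod_cast hT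
  have h0 : (0 : ℝ) < T := by linarith
  have h1 := Finset.sum_pow_mul_eq_add_pow (1 / (T : ℝ)) 1 U
  have h2 : ((U.powerset.filter (fun s => s.card ≤ D)).card : ℝ) * (1 / (T : ℝ)) ^ D ≤
      (1 / (T : ℝ) + 1) ^ U.card := by
    rw [← h1, ← nsmul_eq_mul]
    refine (Finset.card_nsmul_le_sum (U.powerset.filter (fun s => s.card ≤ D))
      (fun s => (1 / (T : ℝ)) ^ s.card * 1 ^ (U.card - s.card)) _ ?_).trans ?_
    · intro s hs
      rw [one_pow, mul_one]
      apply pow_le_pow_of_le_one (by positivity)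
      · rw [div_le_one h0]; exact hT'
      · exact (Finset.mem_filter.1 hs).2
    · apply Finset.sum_le_sum_of_subset_of_nonneg (Finset.filter_subset _ _)
      intro s _ _; positivity
  have h3 : (1 / (T : ℝ) + 1) ^ U.card ≤ (1 + 1 / (T : ℝ)) ^ M := by
    rw [add_comm]
    apply pow_le_pow_right₀ _ hU
    have : 0 < 1 / (T : ℝ) := by positivity
    linarith
  have h4 : (T : ℝ) ^ D * (1 / (T : ℝ)) ^ D = 1 := by
    rw [← mul_pow, mul_one_div_cancel h0.ne', one_pow]
  have h5 : (0 : ℝ) < T ^ D := by positivity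
  calc ((U.powerset.filter (fun s => s.card ≤ D)).card : ℝ)
      = (T : ℝ) ^ D * (((U.powerset.filter (fun s => s.card ≤ D)).card : ℝ) * (1 / (T : ℝ)) ^ D) := by
        rw [mul_left_comm, h4, mul_one]
    _ ≤ _ := mul_le_mul_of_nonneg_left (h2.trans h3) h5.le

/-- supports -/
noncomputable def supF (X J0 M D : ℕ) : Finset (Finset ℕ) :=
  (famC X J0 M).biUnion (fun U => U.powerset.filter (fun s => s.card ≤ D))

lemma supF_card (X J0 M D T : ℕ) (hT : 0 < T) : ((supF X J0 M D).card : ℝ) ≤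
    ((X : ℝ) + 2) ^ (13 * J0 + 3) * ((T : ℝ) ^ D * (1 + 1 / (T : ℝ)) ^ M) := by
  have h1 : ((supF X J0 M D).card : ℝ) ≤
      ∑ U ∈ famC X J0 M, ((U.powerset.filter (fun s => s.card ≤ D)).card : ℝ) := by
    exact_mod_cast Finset.card_biUnion_le
  have h2 : ∑ U ∈ famC X J0 M, ((U.powerset.filter (fun s => s.card ≤ D)).card : ℝ) ≤
      (famC X J0 M).card • ((T : ℝ) ^ D * (1 + 1 / (T : ℝ)) ^ M) := by
    apply Finset.sum_le_card_nsmul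
    intro U hU
    exact small_subsets U D M T hT (Finset.mem_filter.1 hU).2
  have h3 : ((famC X J0 M).card : ℝ) ≤ ((X : ℝ) + 2) ^ (13 * J0 + 3) := by
    exact_mod_cast famC_card X J0 M
  rw [nsmul_eq_mul] at h2
  refine h1.trans (h2.trans (mul_le_mul_of_nonneg_right h3 (by positivity)))

/-- low multiplicity part -/
noncomputable def lowF (X J0 M D K : ℕ) : Finset (Multiset ℕ) :=
  (supF X J0 M D).biUnion (fun s =>
    (s.finsupp (fun _ => Finset.range K)).image (fun f => Multiset.toFinsupp.symm f))

lemma lowF_card (X J0 M D K : ℕ) (hK : 0 < K) :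
    (lowF X J0 M D K).card ≤ (supF X J0 M D).card * K ^ D := by
  apply Finset.card_biUnion_le_card_mul
  intro s hs
  refine Finset.card_image_le.trans ?_
  rw [Finset.card_finsupp]
  simp only [Finset.card_range, Finset.prod_const]
  apply Nat.pow_le_pow_right hK
  obtain ⟨U, _, hU⟩ := Finset.mem_biUnion.1 hs
  exact (Finset.mem_filter.1 hU).2

/-- all relevant multisets -/
noncomputable def allF (X J0 M D K m v : ℕ) : Finset (Multiset ℕ) :=
  (lowF X J0 M D K ×ˢ HS m (2 * m ^ 2) v).image (fun p => p.1 + p.2)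

lemma allF_card (X J0 M D K m v T : ℕ) (hT : 0 < T) (hK : 0 < K) :
    ((allF X J0 M D K m v).card : ℝ) ≤
      ((X : ℝ) + 2) ^ (13 * J0 + 3) * ((T : ℝ) ^ D * (1 + 1 / (T : ℝ)) ^ M) * (K : ℝ) ^ D *
        (1 + ((m : ℝ) + 1) * (2 * (m : ℝ) ^ 2 + 1)) ^ v := by
  have h1 : (allF X J0 M D K m v).card ≤ (supF X J0 M D).card * K ^ D *
      (1 + (m + 1) * (2 * m ^ 2 + 1)) ^ v := by
    refine Finset.card_image_le.trans ?_
    rw [Finset.card_product]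
    exact Nat.mul_le_mul (lowF_card X J0 M D K hK) (HS_card _ _ _)
  have h2 : ((allF X J0 M D K m v).card : ℝ) ≤ ((supF X J0 M D).card : ℝ) * (K : ℝ) ^ D *
      (1 + ((m : ℝ) + 1) * (2 * (m : ℝ) ^ 2 + 1)) ^ v := by exact_mod_cast h1
  refine h2.trans ?_
  gcongr
  exact supF_card X J0 M D T hT

lemma mem_allF {P Q : Multiset ℕ} (m ℓ J0 γ R A D K v : ℕ) (hm : 0 < m) (hG : Good P Q)
    (hP : ∀ p ∈ P, 0 < p ∧ p ≤ m) (hQ : ∀ p ∈ Q, 0 < p ∧ p ≤ m)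
    (hmℓ : m < 2 ^ ℓ) (hℓ : 1 ≤ ℓ) (hR : R = 4 * (ℓ + 2)) (hA : A = (4 * R + 1) * m)
    (hJ0 : 16 * R * (ℓ + 1) ≤ J0) (hγJ : 64 * A < γ * J0) (hγ : γ ≤ m) (hK : 0 < K)
    (hD : 64 ≤ D) (hD2 : 2 ^ 15 * ℓ ^ 2 ≤ D) (hD3 : 2 ^ 25 * ℓ * m ≤ D ^ 2)
    (hv : 64 ≤ v) (hv2 : 2 ^ 15 * ℓ ^ 2 ≤ v) (hv3 : 2 ^ 25 * ℓ * m ≤ K * v ^ 2) :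
    Q ∈ allF (16 * A) J0 (10 * J0 + 24 * γ) D K m v := by
  obtain ⟨Cu, a, Yu, Y, h, g, Z, h1, h2, h3, h4, h5, h6, h7, h8, h9, h10, h11, h12⟩ :=
    app2 m ℓ J0 γ R A hm hG hP hQ hmℓ hR hA hJ0 hγJ hγ
  have hmA : m ≤ 16 * A := by rw [hA]; nlinarith
  rw [Multiset.card_add] at h6
  have hfam : Z.toFinset ∪ EN Cu a Yu Y h g ∈ famC (16 * A) J0 (10 * J0 + 24 * γ) := by
    rw [famC, Finset.mem_filter]
    refine ⟨Finset.mem_image.2 ⟨(((Cu, Yu), (Y, Z)), ((a, h), g)), ?_, rfl⟩, ?_⟩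
    · simp only [Finset.mem_product, Finset.mem_range]
      refine ⟨⟨⟨mem_MS _ _ _ h1 h2, mem_MS _ _ _ (by omega) (fun x hx => (h4 x hx).trans hmA)⟩,
        mem_MS _ _ _ (by omega) (fun x hx => (h5 x hx).trans hmA),
        mem_MS _ _ _ h11 (fun x hx => (h10 x hx).trans hmA)⟩, ⟨by omega, by omega⟩, by omega⟩
    · refine (Finset.card_union_le _ _).trans ?_
      have := Multiset.toFinset_card_le Z
      omega
  have hDc : Q.toFinset.card ≤ D := by
    have := app1 m ℓ 1 D hm hG hP hQ hmℓ hℓ (by norm_num) hD hD2 (by simpa using hD3)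
    refine le_trans (Finset.card_le_card ?_) this
    intro q hq
    rw [highSet, Finset.mem_filter]
    exact ⟨hq, Multiset.count_pos.2 (Multiset.mem_toFinset.1 hq)⟩
  have hsup : Q.toFinset ∈ supF (16 * A) J0 (10 * J0 + 24 * γ) D := by
    rw [supF, Finset.mem_biUnion]
    refine ⟨_, hfam, ?_⟩
    rw [Finset.mem_filter, Finset.mem_powerset]
    exact ⟨h12, hDc⟩
  have hvc := app1 m ℓ K v hm hG hP hQ hmℓ hℓ hK hv hv2 hv3
  rw [allF, Finset.mem_image]
  refine ⟨(Q.filter (fun q => ¬ K ≤ Q.count q), Q.filter (fun q => K ≤ Q.count q)), ?_, ?_⟩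
  · rw [Finset.mem_product]
    constructor
    · simp only [lowF]
      rw [Finset.mem_biUnion]
      refine ⟨_, hsup, ?_⟩
      rw [Finset.mem_image]
      refine ⟨Multiset.toFinsupp (Q.filter (fun q => ¬ K ≤ Q.count q)), ?_, by simp⟩
      rw [Finset.mem_finsupp_iff]
      constructor
      · intro q hq
        rw [Multiset.toFinsupp_support, Multiset.mem_toFinset, Multiset.mem_filter] at hq
        exact Multiset.mem_toFinset.2 hq.1
      · intro q _
        rw [Multiset.toFinsupp_apply, Finset.mem_range, Multiset.count_filter]
        split_ifs <;> omega
    · apply mem_HS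
      · refine le_trans (Finset.card_le_card ?_) hvc
        intro q hq
        rw [Multiset.mem_toFinset, Multiset.mem_filter] at hq
        rw [highSet, Finset.mem_filter]
        exact ⟨Multiset.mem_toFinset.2 hq.1, hq.2⟩
      · intro x hx; exact (hQ x (Multiset.mem_filter.1 hx).1).2
      · intro x
        exact (Multiset.count_le_of_le _ (Multiset.filter_le _ _)).trans
          (count_bound m hG hP hQ x)
  · simp only
    rw [add_comm]
    exact Multiset.filter_add_not _ _
end Counting

section Asympt
open Classical

lemma pow8_le (a : ℕ) : ∃ x0, ∀ x, x0 ≤ x → 2 ^ a * x ^ 8 ≤ 2 ^ x := by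
  have h : Filter.Tendsto (fun x : ℕ => (x : ℝ) ^ 8 / (2 : ℝ) ^ x) Filter.atTop (nhds 0) :=
    tendsto_pow_const_div_const_pow_of_one_lt 8 (by norm_num)
  have h2 := h.eventually (gt_mem_nhds (show (0 : ℝ) < 1 / 2 ^ a by positivity))
  obtain ⟨x0, hx0⟩ := Filter.eventually_atTop.1 h2
  refine ⟨x0, fun x hx => ?_⟩
  have h3 := hx0 x hx
  rw [div_lt_div_iff₀ (by positivity) (by positivity)] at h3
  have : (2 : ℝ) ^ a * (x : ℝ) ^ 8 ≤ 2 ^ x := by linarith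
  exact_mod_cast this

lemma log_sqrt_le : ∃ l0, ∀ l, l0 ≤ l → 2 ^ 22 * (Nat.log 2 l + 1) ≤ Nat.sqrt l := by
  obtain ⟨x0, hx0⟩ := pow8_le 45
  refine ⟨2 ^ x0, fun l hl => ?_⟩
  have hl0 : l ≠ 0 := by
    have : 0 < 2 ^ x0 := by positivity
    omega
  have h1 : x0 ≤ Nat.log 2 l := Nat.le_log_of_pow_le (by norm_num) hl
  have h2 := hx0 (Nat.log 2 l + 1) (by omega)
  have h3 := Nat.pow_log_le_self 2 hl0
  rw [Nat.le_sqrt']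
  set t := Nat.log 2 l + 1 with ht
  have h4 : t ^ 2 ≤ t ^ 8 := Nat.pow_le_pow_right (by omega) (by norm_num)
  have h5 : 2 ^ t = 2 * 2 ^ (Nat.log 2 l) := by rw [ht, pow_succ]; ring
  have h6 : (2 ^ 22 * t) ^ 2 = 2 ^ 44 * t ^ 2 := by ring
  rw [h6]
  omega

set_option maxHeartbeats 2000000 in
lemma card_asym (m ℓ s r t : ℕ) (hℓ : ℓ = Nat.log 2 m + 1) (hs : s = Nat.sqrt m)
    (hr : r = Nat.sqrt ℓ) (ht : t = Nat.log 2 ℓ + 1) (hm0 : m ≠ 0)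
    (c1 : 2 ^ 20 * ℓ ^ 4 ≤ s) (c2 : 2 ^ 22 * t ≤ r) :
    ∃ F : Finset (Multiset ℕ), (∀ P Q : Multiset ℕ, Good P Q → (∀ p ∈ P, 0 < p ∧ p ≤ m) →
      (∀ q ∈ Q, 0 < q ∧ q ≤ m) → Q ∈ F) ∧
      (F.card : ℝ) ≤ Real.exp (2 * Real.sqrt m * Real.log m) := by
  have hmℓ : m < 2 ^ ℓ := by rw [hℓ]; exact Nat.lt_pow_succ_log_self (by norm_num) m
  have hmℓ' : 2 ^ (ℓ - 1) ≤ m := by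
    rw [hℓ]; exact Nat.pow_log_le_self 2 hm0
  have hℓt : ℓ < 2 ^ t := by rw [ht]; exact Nat.lt_pow_succ_log_self (by norm_num) ℓ
  have hℓ1 : 1 ≤ ℓ := by omega
  have ht1 : 1 ≤ t := by omega
  have hr1 : 1 ≤ r := by omega
  have hr22 : 2 ^ 22 ≤ r := by omega
  have hrr : r * r ≤ ℓ := by rw [hr]; exact Nat.sqrt_le ℓ
  have hrr' : ℓ < (r + 1) * (r + 1) := by rw [hr]; exact Nat.lt_succ_sqrt ℓ
  have hℓr : ℓ ≤ 4 * (r * r) := by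
    have : (r + 1) * (r + 1) ≤ (2 * r) * (2 * r) := Nat.mul_le_mul (by omega) (by omega)
    have h2 : (2 * r) * (2 * r) = 4 * (r * r) := by ring
    omega
  have hss : s * s ≤ m := by rw [hs]; exact Nat.sqrt_le m
  have hss' : m < (s + 1) * (s + 1) := by rw [hs]; exact Nat.lt_succ_sqrt m
  have hp1 : ℓ ≤ ℓ ^ 2 := by rw [sq]; exact Nat.le_mul_self ℓ
  have hp2 : ℓ ^ 2 ≤ ℓ ^ 3 := Nat.pow_le_pow_right hℓ1 (by norm_num)
  have hp3 : ℓ ^ 3 ≤ ℓ ^ 4 := Nat.pow_le_pow_right hℓ1 (by norm_num)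
  have hs1 : 1 ≤ s := by omega
  have hms : m ≤ 4 * (s * s) := by
    have : (s + 1) * (s + 1) ≤ (2 * s) * (2 * s) := Nat.mul_le_mul (by omega) (by omega)
    have h2 : (2 * s) * (2 * s) = 4 * (s * s) := by ring
    omega
  have hrℓ : r ≤ ℓ := (Nat.le_mul_self r).trans hrr
  -- parameters
  obtain ⟨R, hR⟩ : ∃ R, R = 4 * (ℓ + 2) := ⟨_, rfl⟩
  obtain ⟨A, hA⟩ : ∃ A, A = (4 * R + 1) * m := ⟨_, rfl⟩
  obtain ⟨J0, hJ0⟩ : ∃ J0, J0 = s / ℓ := ⟨_, rfl⟩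
  have hJs : J0 * ℓ ≤ s := by rw [hJ0]; exact Nat.div_mul_le_self s ℓ
  have hJs' : s < (J0 + 1) * ℓ := by
    rw [hJ0, mul_comm]; exact Nat.lt_mul_div_succ s (by omega)
  have hJbig : 2 ^ 20 * ℓ ^ 3 ≤ J0 := by
    rw [hJ0, Nat.le_div_iff_mul_le (by omega)]
    calc _ = 2 ^ 20 * ℓ ^ 4 := by ring
      _ ≤ s := c1
  have hJ1 : 1 ≤ J0 := by omega
  have hJ2 : s ≤ 2 * J0 * ℓ := by
    have : (J0 + 1) * ℓ ≤ 2 * J0 * ℓ := Nat.mul_le_mul_right _ (by omega)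
    omega
  obtain ⟨γ, hγ⟩ : ∃ γ, γ = 64 * A / J0 + 1 := ⟨_, rfl⟩
  have hγ1 : 64 * A < γ * J0 := by
    rw [hγ, mul_comm _ J0]; exact Nat.lt_mul_div_succ _ (by omega)
  have hγ2 : (γ - 1) * J0 ≤ 64 * A := by
    rw [hγ, Nat.add_sub_cancel]; exact Nat.div_mul_le_self _ _
  have hAb : A ≤ 49 * ℓ * m := by
    rw [hA, hR]; apply Nat.mul_le_mul_right; omega
  have hmpos : 0 < m := Nat.pos_of_ne_zero hm0
  have hm2 : 2 ≤ m := by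
    have := Nat.le_mul_self s
    omega
  have hγm : γ ≤ m := by
    by_contra hcon
    have h1 : m ≤ γ - 1 := by omega
    have h2 : m * J0 ≤ 64 * A := (Nat.mul_le_mul_right _ h1).trans hγ2
    have h3 : m * J0 ≤ m * (3136 * ℓ) := by
      calc _ ≤ 64 * A := h2
        _ ≤ 64 * (49 * ℓ * m) := by omega
        _ = _ := by ring
    have h4 := Nat.le_of_mul_le_mul_left h3 hmpos
    omega
  have hγs : γ ≤ 2 ^ 15 * (ℓ ^ 2 * s) := by
    have h1 : (γ - 1) * s ≤ (25088 * ℓ ^ 2 * s) * s := by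
      calc (γ - 1) * s ≤ (γ - 1) * (2 * J0 * ℓ) := Nat.mul_le_mul_left _ hJ2
        _ = 2 * ℓ * ((γ - 1) * J0) := by ring
        _ ≤ 2 * ℓ * (64 * A) := Nat.mul_le_mul_left _ hγ2
        _ ≤ 2 * ℓ * (64 * (49 * ℓ * (4 * (s * s)))) := by
            gcongr
            exact hAb.trans (Nat.mul_le_mul_left _ hms)
        _ = _ := by ring
    have h2 := Nat.le_of_mul_le_mul_right h1 (by omega)
    have h3 : 1 ≤ ℓ ^ 2 * s := Nat.mul_pos (by positivity) (by omega)
    have h4 : 25088 * ℓ ^ 2 * s = 25088 * (ℓ ^ 2 * s) := by ring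
    omega
  obtain ⟨K, hK⟩ : ∃ K, K = 2 ^ (2 * t) := ⟨_, rfl⟩
  have hKℓ : ℓ ^ 2 ≤ K := by
    rw [hK, mul_comm, pow_mul]; exact Nat.pow_le_pow_left hℓt.le 2
  obtain ⟨D, hD⟩ : ∃ D, D = 2 ^ 14 * s * (r + 1) := ⟨_, rfl⟩
  obtain ⟨v, hv⟩ : ∃ v, v = 2 ^ 14 * (s / r + 1) := ⟨_, rfl⟩
  have hvr : 2 ^ 14 * s ≤ v * r := by
    have := (Nat.lt_mul_div_succ s (show 0 < r by omega)).le
    calc 2 ^ 14 * s ≤ 2 ^ 14 * (r * (s / r + 1)) := Nat.mul_le_mul_left _ this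
      _ = _ := by rw [hv]; ring
  have hvℓ2 : 2 ^ 15 * ℓ ^ 2 ≤ v := by
    have h1 : (2 ^ 15 * ℓ ^ 2) * ℓ ≤ v * ℓ := by
      calc (2 ^ 15 * ℓ ^ 2) * ℓ = 2 ^ 15 * ℓ ^ 3 := by ring
        _ ≤ 2 ^ 14 * s := by omega
        _ ≤ v * r := hvr
        _ ≤ v * ℓ := Nat.mul_le_mul_left _ hrℓ
    exact Nat.le_of_mul_le_mul_right h1 (by omega)
  have hDs : s ≤ D := by
    rw [hD]
    calc s ≤ 2 ^ 14 * s := by omega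
      _ ≤ _ := Nat.le_mul_of_pos_right _ (by omega)
  have hvK : 2 ^ 25 * ℓ * m ≤ K * v ^ 2 := by
    calc 2 ^ 25 * ℓ * m ≤ 2 ^ 25 * ℓ * (4 * (s * s)) := Nat.mul_le_mul_left _ hms
      _ = ℓ * (2 ^ 27 * (s * s)) := by ring
      _ ≤ ℓ * ((2 ^ 14 * s) * (2 ^ 14 * s)) := by
          apply Nat.mul_le_mul_left
          have : (2 ^ 14 * s) * (2 ^ 14 * s) = 2 ^ 28 * (s * s) := by ring
          omega
      _ ≤ ℓ * ((v * r) * (v * r)) := by gcongr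
      _ = (ℓ * (r * r)) * v ^ 2 := by ring
      _ ≤ (ℓ * ℓ) * v ^ 2 := by gcongr
      _ = ℓ ^ 2 * v ^ 2 := by ring
      _ ≤ _ := by gcongr
  have hDD : 2 ^ 25 * ℓ * m ≤ D ^ 2 := by
    calc 2 ^ 25 * ℓ * m ≤ 2 ^ 25 * ((r + 1) * (r + 1)) * (4 * (s * s)) := by gcongr
      _ = 2 ^ 27 * (s ^ 2 * (r + 1) ^ 2) := by ring
      _ ≤ 2 ^ 28 * (s ^ 2 * (r + 1) ^ 2) := by gcongr <;> norm_num
      _ = _ := by rw [hD]; ring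
  have hJ0' : 16 * R * (ℓ + 1) ≤ J0 := by
    rw [hR]
    have : 16 * (4 * (ℓ + 2)) * (ℓ + 1) = 64 * ℓ ^ 2 + 192 * ℓ + 128 := by ring
    omega
  have hv64 : 64 ≤ v := by omega
  refine ⟨allF (16 * A) J0 (10 * J0 + 24 * γ) D K m v, fun P Q hG hP hQ =>
    mem_allF m ℓ J0 γ R A D K v hmpos hG hP hQ hmℓ hℓ1 hR hA hJ0' hγ1 hγm (by omega)
      (by omega) (by omega) hDD hv64 hvℓ2 hvK, ?_⟩
  refine (allF_card (16 * A) J0 (10 * J0 + 24 * γ) D K m v K (by omega) (by omega)).trans ?_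
  -- bounds of the factors
  have hℓ2 : ℓ < 2 ^ ℓ := Nat.lt_two_pow_self
  have hJles : J0 ≤ s := (Nat.le_mul_of_pos_right _ (by omega)).trans hJs
  have e1 : (16 * A + 2) ^ (13 * J0 + 3) ≤ 2 ^ (192 * s) := by
    have h1 : 16 * A + 2 ≤ 2 ^ (12 * ℓ) := by
      calc 16 * A + 2 ≤ 16 * (49 * ℓ * m) + 2 := by omega
        _ ≤ 2 ^ 10 * (ℓ * m) := by
            have : 1 ≤ ℓ * m := Nat.mul_pos (by omega) (by omega)
            have h4 : 49 * ℓ * m = 49 * (ℓ * m) := by ring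
            omega
        _ ≤ 2 ^ 10 * (2 ^ ℓ * 2 ^ ℓ) := by gcongr
        _ = 2 ^ (10 + (ℓ + ℓ)) := by rw [pow_add, pow_add]
        _ ≤ _ := Nat.pow_le_pow_right (by norm_num) (by omega)
    calc _ ≤ (2 ^ (12 * ℓ)) ^ (13 * J0 + 3) := Nat.pow_le_pow_left h1 _
      _ = 2 ^ (12 * ℓ * (13 * J0 + 3)) := by rw [← pow_mul]
      _ ≤ _ := by
        apply Nat.pow_le_pow_right (by norm_num)
        have : 12 * ℓ * (13 * J0 + 3) = 156 * (J0 * ℓ) + 36 * ℓ := by ring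
        omega
  have e2 : (1 + (m + 1) * (2 * m ^ 2 + 1)) ^ v ≤ 2 ^ (30 * 2 ^ 14 * (r * s)) := by
    have h1 : 1 + (m + 1) * (2 * m ^ 2 + 1) ≤ 2 ^ (6 * ℓ) := by
      calc 1 + (m + 1) * (2 * m ^ 2 + 1) ≤ 8 * m ^ 3 := by
            have q1 : 1 ≤ m ^ 2 := Nat.one_le_pow _ _ hmpos
            have q2 : 1 ≤ m ^ 3 := Nat.one_le_pow _ _ hmpos
            have q3 : 2 * m ^ 2 ≤ m ^ 3 := by
              rw [pow_succ m 2, mul_comm]; exact Nat.mul_le_mul_left _ hm2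
            have q4 : m ≤ m ^ 2 := by rw [sq]; exact Nat.le_mul_self m
            have q5 : 1 + (m + 1) * (2 * m ^ 2 + 1) = 2 * m ^ 3 + 2 * m ^ 2 + m + 2 := by ring
            omega
        _ ≤ 8 * (2 ^ ℓ) ^ 3 := by gcongr
        _ = 2 ^ (3 + ℓ * 3) := by rw [pow_add, pow_mul]; norm_num
        _ ≤ _ := Nat.pow_le_pow_right (by norm_num) (by omega)
    calc _ ≤ (2 ^ (6 * ℓ)) ^ v := Nat.pow_le_pow_left h1 _
      _ = 2 ^ (6 * ℓ * v) := by rw [← pow_mul]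
      _ ≤ _ := by
        apply Nat.pow_le_pow_right (by norm_num)
        have h2 : ℓ * (s / r) ≤ 4 * (r * s) := by
          calc ℓ * (s / r) ≤ 4 * (r * r) * (s / r) := Nat.mul_le_mul_right _ hℓr
            _ = 4 * (r * (s / r * r)) := by ring
            _ ≤ 4 * (r * s) := by gcongr; exact Nat.div_mul_le_self s r
        have h3 : ℓ ≤ r * s := (show ℓ ≤ s by omega).trans (Nat.le_mul_of_pos_left _ (by omega))
        calc 6 * ℓ * v = 6 * 2 ^ 14 * (ℓ * (s / r) + ℓ) := by rw [hv]; ring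
          _ ≤ 6 * 2 ^ 14 * (4 * (r * s) + r * s) := by gcongr
          _ = _ := by ring
  have e3 : K ^ D = 2 ^ (2 * t * D) := by rw [hK, ← pow_mul]
  have e4 : (1 + 1 / (K : ℝ)) ^ (10 * J0 + 24 * γ) ≤ 2 ^ (2 ^ 21 * s) := by
    have hK0 : (0 : ℝ) < K := by
      have : 0 < K := by rw [hK]; positivity
      exact_mod_cast this
    have hMK : 10 * J0 + 24 * γ ≤ 2 ^ 20 * s * K := by
      calc 10 * J0 + 24 * γ ≤ 10 * s + 24 * (2 ^ 15 * (ℓ ^ 2 * s)) := by omega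
        _ ≤ 10 * (ℓ ^ 2 * s) + 24 * (2 ^ 15 * (ℓ ^ 2 * s)) := by
            have : s ≤ ℓ ^ 2 * s := Nat.le_mul_of_pos_left _ (by positivity)
            omega
        _ ≤ 2 ^ 20 * s * ℓ ^ 2 := by
            have : 2 ^ 20 * s * ℓ ^ 2 = 2 ^ 20 * (ℓ ^ 2 * s) := by ring
            omega
        _ ≤ _ := by gcongr
    have hMK' : ((10 * J0 + 24 * γ : ℕ) : ℝ) ≤ 2 ^ 20 * s * K := by exact_mod_cast hMK
    have h5 : (1 + 1 / (K : ℝ)) ≤ Real.exp (1 / K) := by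
      have := Real.add_one_le_exp (1 / (K : ℝ)); linarith
    calc (1 + 1 / (K : ℝ)) ^ (10 * J0 + 24 * γ) ≤ (Real.exp (1 / K)) ^ (10 * J0 + 24 * γ) := by
          gcongr
      _ = Real.exp (((10 * J0 + 24 * γ : ℕ) : ℝ) * (1 / K)) := by rw [← Real.exp_nat_mul]
      _ ≤ Real.exp ((2 ^ 20 * s : ℕ) * 1) := by
          apply Real.exp_le_exp.2
          rw [mul_one_div, div_le_iff₀ hK0]
          push_cast at hMK' ⊢
          linarith
      _ = (Real.exp 1) ^ (2 ^ 20 * s) := by rw [Real.exp_nat_mul]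
      _ ≤ (2 ^ 2) ^ (2 ^ 20 * s) := by
          gcongr
          have := Real.exp_one_lt_d9; linarith
      _ = _ := by rw [← pow_mul]; congr 1; ring
  have hbig : (((16 * A : ℕ) : ℝ) + 2) ^ (13 * J0 + 3) *
      ((K : ℝ) ^ D * (1 + 1 / (K : ℝ)) ^ (10 * J0 + 24 * γ)) * (K : ℝ) ^ D *
      (1 + ((m : ℝ) + 1) * (2 * (m : ℝ) ^ 2 + 1)) ^ v ≤ (2 : ℝ) ^ (2 ^ 22 * (s * r * t)) := by
    have e1' : (((16 * A : ℕ) : ℝ) + 2) ^ (13 * J0 + 3) ≤ 2 ^ (192 * s) := by exact_mod_cast e1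
    have e2' : (1 + ((m : ℝ) + 1) * (2 * (m : ℝ) ^ 2 + 1)) ^ v ≤ 2 ^ (30 * 2 ^ 14 * (r * s)) := by
      exact_mod_cast e2
    have e3' : (K : ℝ) ^ D = 2 ^ (2 * t * D) := by exact_mod_cast e3
    rw [e3']
    calc _ ≤ (2 : ℝ) ^ (192 * s) * (2 ^ (2 * t * D) * 2 ^ (2 ^ 21 * s)) * 2 ^ (2 * t * D) *
          2 ^ (30 * 2 ^ 14 * (r * s)) := by gcongr
      _ = (2 : ℝ) ^ (192 * s + (2 * t * D + 2 ^ 21 * s) + 2 * t * D + 30 * 2 ^ 14 * (r * s)) := by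
          simp only [pow_add]
      _ ≤ _ := by
        apply pow_le_pow_right₀ (by norm_num)
        have q1 : s ≤ s * r := Nat.le_mul_of_pos_right _ (by omega)
        have q2 : s * r ≤ s * r * t := Nat.le_mul_of_pos_right _ (by omega)
        have q3 : t * D ≤ 2 ^ 15 * (s * r * t) := by
          calc t * D = 2 ^ 14 * s * (r + 1) * t := by rw [hD]; ring
            _ ≤ 2 ^ 14 * s * (2 * r) * t := by gcongr; omega
            _ = _ := by ring
        have q4 : 2 * t * D = 2 * (t * D) := by ring
        have q5 : r * s = s * r := by ring
        rw [q4, q5]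
        omega
  refine le_trans (le_of_eq ?_) (hbig.trans ?_)
  · push_cast; rfl
  · have h2 : (2 : ℝ) = Real.exp (Real.log 2) := (Real.exp_log (by norm_num)).symm
    rw [h2, ← Real.exp_nat_mul]
    rw [← h2]
    apply Real.exp_le_exp.2
    have hsm : (s : ℝ) ≤ Real.sqrt m := by
      apply Real.le_sqrt_of_sq_le
      rw [sq]; exact_mod_cast hss
    have hlog : ((ℓ - 1 : ℕ) : ℝ) * Real.log 2 ≤ Real.log m := by
      rw [← Real.log_pow]
      apply Real.log_le_log (by positivity)
      exact_mod_cast hmℓ'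
    have hl2 : 0 < Real.log 2 := Real.log_pos (by norm_num)
    have hnat : 2 ^ 22 * (s * r * t) ≤ 2 * s * (ℓ - 1) := by
      have : r * r ≤ 2 * (ℓ - 1) := by omega
      calc 2 ^ 22 * (s * r * t) = s * (r * (2 ^ 22 * t)) := by ring
        _ ≤ s * (r * r) := by gcongr
        _ ≤ s * (2 * (ℓ - 1)) := by gcongr
        _ = _ := by ring
    have hnat' : ((2 ^ 22 * (s * r * t) : ℕ) : ℝ) ≤ 2 * s * ((ℓ - 1 : ℕ) : ℝ) := by
      exact_mod_cast hnat
    calc _ ≤ 2 * s * ((ℓ - 1 : ℕ) : ℝ) * Real.log 2 := by gcongr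
      _ = 2 * s * (((ℓ - 1 : ℕ) : ℝ) * Real.log 2) := by ring
      _ ≤ 2 * Real.sqrt m * Real.log m := by gcongr

lemma exists_family : ∃ m0 : ℕ, ∀ m, m0 ≤ m →
    ∃ F : Finset (Multiset ℕ), (∀ P Q : Multiset ℕ, Good P Q → (∀ p ∈ P, 0 < p ∧ p ≤ m) →
      (∀ q ∈ Q, 0 < q ∧ q ≤ m) → Q ∈ F) ∧
      (F.card : ℝ) ≤ Real.exp (2 * Real.sqrt m * Real.log m) := by
  obtain ⟨l0, hl0⟩ := log_sqrt_le
  obtain ⟨x0, hx0⟩ := pow8_le 41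
  refine ⟨2 ^ (l0 + x0), fun m hm => ?_⟩
  have hm0 : m ≠ 0 := by
    have : 0 < 2 ^ (l0 + x0) := by positivity
    omega
  have h1 : l0 + x0 ≤ Nat.log 2 m := Nat.le_log_of_pow_le (by norm_num) hm
  refine card_asym m _ _ _ _ rfl rfl rfl rfl hm0 ?_ (hl0 _ (by omega))
  rw [Nat.le_sqrt']
  have h2 := hx0 (Nat.log 2 m + 1) (by omega)
  have h3 := Nat.pow_log_le_self 2 hm0
  have h4 : (2 : ℕ) ^ (Nat.log 2 m + 1) = 2 * 2 ^ (Nat.log 2 m) := by rw [pow_succ]; ring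
  have h5 : (2 ^ 20 * (Nat.log 2 m + 1) ^ 4) ^ 2 = 2 ^ 40 * (Nat.log 2 m + 1) ^ 8 := by ring
  rw [h5]
  omega
end Asympt

section Reduction
open Classical

/-- weight of a multiset of variables -/
def mwt {ι : Type} (w : ι → ℤ) (F : Multiset ι) : ℤ := (F.map w).sum

/-- minimal nonzero weight-zero monomials -/
def IsAtomM {ι : Type} (w : ι → ℤ) (F : Multiset ι) : Prop :=
  F ≠ 0 ∧ mwt w F = 0 ∧ ∀ G ≤ F, mwt w G = 0 → G = 0 ∨ G = F

/-- the monomial of a multiset of variables -/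
noncomputable def mmon {ι : Type} (F : Multiset ι) : MvPolynomial ι k :=
  (F.map (X : ι → MvPolynomial ι k)).prod

lemma mwt_add {ι : Type} (w : ι → ℤ) (F G : Multiset ι) : mwt w (F + G) = mwt w F + mwt w G := by
  simp [mwt]

lemma mmon_add {ι : Type} (F G : Multiset ι) : mmon k (F + G) = mmon k F * mmon k G := by
  simp [mmon]

lemma mmon_eq {ι : Type} (f : ι →₀ ℕ) : (monomial f (1 : k)) = mmon k (Finsupp.toMultiset f) := by
  rw [mmon, monomial_eq, Finsupp.toMultiset_map, Finsupp.prod_toMultiset]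
  simp [Finsupp.prod_mapDomain_index, pow_add]

lemma torusAct_mmon {ι : Type} (w : ι → ℤ) (t : kˣ) (F : Multiset ι) :
    torusAct k w t (mmon k F) = ((t ^ mwt w F : kˣ) : k) • mmon k F := by
  induction F using Multiset.induction_on with
  | empty => simp [mmon, mwt]
  | cons a F ih =>
    have h1 : mmon k (a ::ₘ F) = X a * mmon k F := by simp [mmon]
    have h2 : mwt w (a ::ₘ F) = w a + mwt w F := by simp [mwt]
    rw [h1, h2, map_mul, ih, zpow_add]
    simp only [torusAct, aeval_X]
    rw [smul_mul_smul_comm, Units.val_mul]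

lemma torusAct_coeff {ι : Type} (w : ι → ℤ) (t : kˣ) (p : MvPolynomial ι k) (f : ι →₀ ℕ) :
    coeff f (torusAct k w t p) = ((t ^ mwt w (Finsupp.toMultiset f) : kˣ) : k) * coeff f p := by
  induction p using MvPolynomial.induction_on' with
  | monomial u a =>
    have h : monomial u a = a • mmon k (Finsupp.toMultiset u) := by
      rw [← mmon_eq, smul_monomial, smul_eq_mul, mul_one]
    rw [h, map_smul, torusAct_mmon, ← mmon_eq, coeff_smul, coeff_smul, coeff_smul, coeff_monomial]
    split_ifs with hu
    · subst hu; simp only [smul_eq_mul]; ring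
    · simp
  | add p q hp hq => rw [map_add, coeff_add, hp, hq, coeff_add]; ring

lemma zpow_two_eq_one [CharZero k] (z : ℤ) (h : (2 : k) ^ z = 1) : z = 0 := by
  have h1 : algebraMap ℚ k ((2 : ℚ) ^ z) = algebraMap ℚ k 1 := by
    rw [map_zpow₀, map_one, map_ofNat, h]
  have h2 := (algebraMap ℚ k).injective h1
  by_contra hz
  rw [zpow_eq_one_iff_right₀ (by norm_num) (by norm_num)] at h2
  exact hz h2

lemma torusInv_support [CharZero k] {ι : Type} (w : ι → ℤ) (p : MvPolynomial ι k)
    (hp : p ∈ torusInv k w) (f : ι →₀ ℕ) (hf : f ∈ p.support) :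
    mwt w (Finsupp.toMultiset f) = 0 := by
  have h1 : torusAct k w (Units.mk0 (2 : k) two_ne_zero) p = p := hp _
  have h2 := torusAct_coeff k w (Units.mk0 (2 : k) two_ne_zero) p f
  rw [h1] at h2
  rw [mem_support_iff] at hf
  apply zpow_two_eq_one k
  have h3 : coeff f p * (2 : k) ^ (mwt w (Finsupp.toMultiset f)) = coeff f p * 1 := by
    rw [mul_one]
    conv_rhs => rw [h2]
    rw [Units.val_zpow_eq_zpow_val, Units.val_mk0, mul_comm]
  exact mul_left_cancel₀ hf h3

lemma mmon_mem_adjoin {ι : Type} (w : ι → ℤ) (F : Multiset ι) : mwt w F = 0 →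
    mmon k F ∈ Algebra.adjoin k (mmon k '' {G : Multiset ι | IsAtomM w G}) := by
  induction F using Multiset.strongInductionOn with
  | ih F ih =>
    intro hF
    by_cases h0 : F = 0
    · subst h0
      have : mmon k (0 : Multiset ι) = 1 := by simp [mmon]
      rw [this]; exact one_mem _
    by_cases hA : IsAtomM w F
    · exact Algebra.subset_adjoin ⟨F, hA, rfl⟩
    · have : ∃ G ≤ F, mwt w G = 0 ∧ ¬ (G = 0 ∨ G = F) := by
        by_contra hcon
        apply hA
        refine ⟨h0, hF, fun G hG hw => ?_⟩
        by_contra h2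
        exact hcon ⟨G, hG, hw, h2⟩
      obtain ⟨G, hG, hw, hne⟩ := this
      rw [not_or] at hne
      obtain ⟨H, rfl⟩ := Multiset.le_iff_exists_add.1 hG
      rw [mwt_add] at hF
      rw [mmon_add]
      have hH : H ≠ 0 := by
        rintro rfl; simp at hne
      refine mul_mem (ih G ?_ hw) (ih H ?_ (by omega))
      · exact lt_of_le_of_ne hG hne.2
      · refine lt_of_le_of_ne (Multiset.le_add_left _ _) ?_
        intro h
        apply hne.1
        have := congrArg Multiset.card h
        rw [Multiset.card_add] at this
        rw [← Multiset.card_eq_zero]; omega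

lemma torusInv_eq_adjoin [CharZero k] {ι : Type} (w : ι → ℤ) :
    Algebra.adjoin k (mmon k '' {G : Multiset ι | IsAtomM w G}) = torusInv k w := by
  apply le_antisymm
  · rw [Algebra.adjoin_le_iff]
    rintro _ ⟨G, hG, rfl⟩
    intro t
    rw [torusAct_mmon, hG.2.1]; simp
  · intro p hp
    rw [p.as_sum]
    refine sum_mem fun f hf => ?_
    have h : monomial f (coeff f p) = coeff f p • mmon k (Finsupp.toMultiset f) := by
      rw [← mmon_eq, smul_monomial, smul_eq_mul, mul_one]
    rw [h]
    exact Subalgebra.smul_mem _ (mmon_mem_adjoin k w _ (torusInv_support k w p hp f hf)) _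

lemma minGens_le [CharZero k] {ι : Type} (w : ι → ℤ) (S : Finset (Multiset ι))
    (hS : ∀ F, F ∈ S ↔ IsAtomM w F) : minGens k (torusInv k w) ≤ S.card := by
  refine le_trans (Nat.sInf_le ⟨S.image (mmon k), rfl, ?_⟩) Finset.card_image_le
  rw [← torusInv_eq_adjoin, Finset.coe_image]
  congr 2
  ext F; exact hS F

/-- positive part -/
def posP {ι : Type} (w : ι → ℤ) (F : Multiset ι) : Multiset ℕ :=
  (F.filter (fun j => 0 < w j)).map (fun j => (w j).natAbs)
/-- negative part -/
def negP {ι : Type} (w : ι → ℤ) (F : Multiset ι) : Multiset ℕ :=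
  (F.filter (fun j => w j < 0)).map (fun j => (w j).natAbs)

lemma mwt_eq {ι : Type} (w : ι → ℤ) (F : Multiset ι) :
    mwt w F = ((posP w F).sum : ℤ) - ((negP w F).sum : ℤ) := by
  induction F using Multiset.induction_on with
  | empty => simp [mwt, posP, negP]
  | cons a F ih =>
    have h2 : mwt w (a ::ₘ F) = w a + mwt w F := by simp [mwt]
    rw [h2, ih]
    simp only [posP, negP, Multiset.filter_cons]
    rcases lt_trichotomy (w a) 0 with h | h | h
    · rw [if_neg (by omega), if_pos h]; simp [abs_of_neg h]; ring
    · rw [if_neg (by omega), if_neg (by omega)]; simp [h]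
    · rw [if_pos h, if_neg (by omega)]; simp [abs_of_pos h]; ring

lemma exists_le_map {α β : Type} (f : α → β) : ∀ (F : Multiset α) (C : Multiset β), C ≤ F.map f →
    ∃ G ≤ F, G.map f = C := by
  intro F
  induction F using Multiset.induction_on with
  | empty => intro C hC; exact ⟨0, le_rfl, by
    rw [Multiset.map_zero] at hC ⊢; exact (Multiset.le_zero.1 hC).symm⟩
  | cons a F ih =>
    intro C hC
    rw [Multiset.map_cons] at hC
    by_cases h : f a ∈ C
    · obtain ⟨C', rfl⟩ := Multiset.exists_cons_of_mem h
      obtain ⟨G, hG, rfl⟩ := ih C' ((Multiset.cons_le_cons_iff _).1 hC)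
      exact ⟨a ::ₘ G, Multiset.cons_le_cons _ hG, by simp⟩
    · obtain ⟨G, hG, rfl⟩ := ih C ((Multiset.le_cons_of_notMem h).1 hC)
      exact ⟨G, hG.trans (Multiset.le_cons_self _ _), rfl⟩

lemma split_atom {ι : Type} (w : ι → ℤ) (F : Multiset ι) (hF : IsAtomM w F)
    (C₁ Q₁ : Multiset ℕ) (hC : C₁ ≤ posP w F) (hQ : Q₁ ≤ negP w F) (hs : C₁.sum = Q₁.sum) :
    (C₁ = 0 ∨ C₁ = posP w F) ∧ (Q₁ = 0 ∨ Q₁ = negP w F) := by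
  obtain ⟨G, hG, rfl⟩ := exists_le_map _ _ _ hC
  obtain ⟨H, hH, rfl⟩ := exists_le_map _ _ _ hQ
  have hGp : ∀ j ∈ G, 0 < w j := fun j hj => (Multiset.mem_filter.1 (Multiset.mem_of_le hG hj)).2
  have hHp : ∀ j ∈ H, w j < 0 := fun j hj => (Multiset.mem_filter.1 (Multiset.mem_of_le hH hj)).2
  have h1 : posP w (G + H) = G.map (fun j => (w j).natAbs) := by
    rw [posP, Multiset.filter_add, Multiset.filter_eq_self.2 hGp,
      Multiset.filter_eq_nil.2 (fun j hj => by have := hHp j hj; omega), add_zero]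
  have h2 : negP w (G + H) = H.map (fun j => (w j).natAbs) := by
    rw [negP, Multiset.filter_add, Multiset.filter_eq_self.2 hHp,
      Multiset.filter_eq_nil.2 (fun j hj => by have := hGp j hj; omega), zero_add]
  have hle : G + H ≤ F := by
    rw [← Multiset.filter_add_not (fun j => 0 < w j) F]
    refine add_le_add hG (hH.trans ?_)
    exact Multiset.monotone_filter_right F (fun j (hj : w j < 0) => by omega)
  have hw : mwt w (G + H) = 0 := by
    rw [mwt_eq, h1, h2, hs, sub_self]
  rw [← h1, ← h2]
  rcases hF.2.2 _ hle hw with h | h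
  · rw [h]; simp [posP, negP]
  · rw [h]; simp

lemma good_pos_neg {ι : Type} (w : ι → ℤ) (F : Multiset ι) (hF : IsAtomM w F) :
    Good (posP w F) (negP w F) ∧ Good (negP w F) (posP w F) := by
  have h := mwt_eq w F
  rw [hF.2.1] at h
  have h' : (posP w F).sum = (negP w F).sum := by omega
  exact ⟨⟨h', fun C₁ hC Q₁ hQ hs => (split_atom w F hF C₁ Q₁ hC hQ hs).2⟩,
    ⟨h'.symm, fun C₁ hC Q₁ hQ hs => (split_atom w F hF Q₁ C₁ hQ hC hs.symm).1⟩⟩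

lemma nonzero_part {ι : Type} (w : ι → ℤ) (F : Multiset ι) :
    (F.filter (fun j => w j ≠ 0)).map w =
      (posP w F).map (fun x : ℕ => (x : ℤ)) + (negP w F).map (fun x : ℕ => -(x : ℤ)) := by
  induction F using Multiset.induction_on with
  | empty => simp [posP, negP]
  | cons a F ih =>
    simp only [posP, negP, Multiset.filter_cons] at ih ⊢
    rcases lt_trichotomy (w a) 0 with h | h | h
    · rw [if_pos (by omega), if_neg (by omega), if_pos h]
      simp only [Multiset.map_add, ih, Multiset.map_singleton, zero_add]
      have : -((w a).natAbs : ℤ) = w a := by omega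
      rw [this]; abel
    · rw [if_neg (by omega), if_neg (by omega), if_neg (by omega)]
      simp only [zero_add, ih]
    · rw [if_pos (by omega), if_pos h, if_neg (by omega)]
      simp only [Multiset.map_add, ih, Multiset.map_singleton, zero_add]
      have : ((w a).natAbs : ℤ) = w a := by omega
      rw [this]; abel

lemma atom_filter {ι : Type} (w : ι → ℤ) (F : Multiset ι) (hF : IsAtomM w F) :
    F.filter (fun j => w j ≠ 0) = F ∨
      (F.filter (fun j => w j ≠ 0) = 0 ∧ ∃ j, w j = 0 ∧ F = {j}) := by
  have h0 : mwt w (F.filter (fun j => w j ≠ 0)) = 0 := by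
    have h1 : mwt w (F.filter (fun j => w j ≠ 0)) = ((posP w F).sum : ℤ) - (negP w F).sum := by
      rw [mwt, nonzero_part, Multiset.sum_add, Multiset.sum_map_neg, ← Nat.coe_castAddMonoidHom,
        map_multiset_sum, map_multiset_sum, sub_eq_add_neg]
    rw [h1, ← mwt_eq, hF.2.1]
  rcases hF.2.2 _ (Multiset.filter_le _ _) h0 with h | h
  · right
    refine ⟨h, ?_⟩
    obtain ⟨j, hj⟩ := Multiset.exists_mem_of_ne_zero hF.1
    have hwj : w j = 0 := by
      by_contra hc
      exact Multiset.filter_eq_nil.1 h j hj hc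
    refine ⟨j, hwj, ?_⟩
    rcases hF.2.2 {j} (Multiset.singleton_le.2 hj) (by simp [mwt, hwj]) with h2 | h2
    · simp at h2
    · exact h2.symm
  · left; exact h

lemma pair_inj {ι : Type} (w : ι → ℤ) (hw : Function.Injective w) (F G : Multiset ι)
    (hF : IsAtomM w F) (hG : IsAtomM w G) (h1 : posP w F = posP w G) (h2 : negP w F = negP w G) :
    F = G := by
  have h3 : F.filter (fun j => w j ≠ 0) = G.filter (fun j => w j ≠ 0) := by
    apply Multiset.map_injective hw
    rw [nonzero_part, nonzero_part, h1, h2]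
  rcases atom_filter w F hF with hf | ⟨hf, i, hi, rfl⟩ <;>
    rcases atom_filter w G hG with hg | ⟨hg, j, hj, rfl⟩
  · rw [← hf, ← hg, h3]
  · exact absurd (hf.symm.trans (h3.trans hg)) hF.1
  · exact absurd (hg.symm.trans (h3.symm.trans hf)) hG.1
  · rw [hw (hi.trans hj.symm)]

lemma minGens_wBin [CharZero k] (n : ℕ) (𝓕 : Finset (Multiset ℕ))
    (h𝓕 : ∀ P Q : Multiset ℕ, Good P Q → (∀ p ∈ P, 0 < p ∧ p ≤ n) →
      (∀ q ∈ Q, 0 < q ∧ q ≤ n) → Q ∈ 𝓕) :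
    minGens k (torusInv k (wBin n)) ≤ 𝓕.card * 𝓕.card := by
  have hinj : Function.Injective (wBin n) := by
    intro i j hij
    simp only [wBin] at hij
    apply Fin.ext; omega
  have hmem : ∀ F, IsAtomM (wBin n) F → (posP (wBin n) F, negP (wBin n) F) ∈ 𝓕 ×ˢ 𝓕 := by
    intro F hF
    obtain ⟨g1, g2⟩ := good_pos_neg _ F hF
    have hp : ∀ p ∈ posP (wBin n) F, 0 < p ∧ p ≤ n := by
      intro p hp
      obtain ⟨j, hj, rfl⟩ := Multiset.mem_map.1 hp
      have h1 := (Multiset.mem_filter.1 hj).2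
      have h2 := j.2
      simp only [wBin] at h1 ⊢
      omega
    have hq : ∀ p ∈ negP (wBin n) F, 0 < p ∧ p ≤ n := by
      intro p hp
      obtain ⟨j, hj, rfl⟩ := Multiset.mem_map.1 hp
      have h1 := (Multiset.mem_filter.1 hj).2
      have h2 := j.2
      simp only [wBin] at h1 ⊢
      omega
    exact Finset.mem_product.2 ⟨h𝓕 _ _ g2 hq hp, h𝓕 _ _ g1 hp hq⟩
  have hinj2 : Set.InjOn (fun F => (posP (wBin n) F, negP (wBin n) F)) {F | IsAtomM (wBin n) F} := by
    intro F hF G hG h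
    simp only [Prod.mk.injEq] at h
    exact pair_inj _ hinj F G hF hG h.1 h.2
  have hfin : {F | IsAtomM (wBin n) F}.Finite :=
    Set.Finite.of_injOn (t := ((𝓕 ×ˢ 𝓕 : Finset _) : Set _)) (fun F hF => hmem F hF) hinj2
      (Finset.finite_toSet _)
  refine (minGens_le k (wBin n) hfin.toFinset (fun F => by simp)).trans ?_
  rw [← Finset.card_product]
  refine Finset.card_le_card_of_injOn (fun F => (posP (wBin n) F, negP (wBin n) F))
    (fun F hF => ?_) (fun F hF G hG h => ?_)
  · exact hmem F (by simpa using hF)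
  · exact hinj2 (by simpa using hF) (by simpa using hG) h

lemma final_aux [CharZero k] : ∃ C : ℝ, 0 ≤ C ∧ ∀ n : ℕ, 1 ≤ n → (minGens k (torusInv k (wBin n)) : ℝ) ≤
    C * n * Real.exp (6 * Real.sqrt n * Real.log n) := by
  obtain ⟨m0, hm0⟩ := exists_family
  refine ⟨1 + ∑ i ∈ Finset.range m0, (minGens k (torusInv k (wBin i)) : ℝ), by positivity, ?_⟩
  intro n hn
  have hn1 : (1 : ℝ) ≤ n := by exact_mod_cast hn
  have hl : 0 ≤ Real.log n := Real.log_nonneg hn1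
  have hs : 0 ≤ ∑ i ∈ Finset.range m0, (minGens k (torusInv k (wBin i)) : ℝ) := by positivity
  have hsq := Real.sqrt_nonneg (n : ℝ)
  have he : 1 ≤ Real.exp (6 * Real.sqrt n * Real.log n) := by
    rw [Real.one_le_exp_iff]; positivity
  by_cases h : m0 ≤ n
  · obtain ⟨F, hF, hc⟩ := hm0 n h
    have h1 : (minGens k (torusInv k (wBin n)) : ℝ) ≤ F.card * F.card := by
      exact_mod_cast minGens_wBin k n F hF
    calc _ ≤ (F.card : ℝ) * F.card := h1
      _ ≤ Real.exp (2 * Real.sqrt n * Real.log n) * Real.exp (2 * Real.sqrt n * Real.log n) := by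
          gcongr
      _ = Real.exp (4 * Real.sqrt n * Real.log n) := by rw [← Real.exp_add]; ring_nf
      _ ≤ 1 * Real.exp (6 * Real.sqrt n * Real.log n) := by
          rw [one_mul]; gcongr; norm_num
      _ ≤ _ := by
          gcongr
          nlinarith
  · have h1 : (minGens k (torusInv k (wBin n)) : ℝ) ≤
        ∑ i ∈ Finset.range m0, (minGens k (torusInv k (wBin i)) : ℝ) :=
      Finset.single_le_sum (f := fun i => (minGens k (torusInv k (wBin i)) : ℝ))
        (fun i _ => by positivity) (Finset.mem_range.2 (by omega))
    calc _ ≤ ∑ i ∈ Finset.range m0, (minGens k (torusInv k (wBin i)) : ℝ) := h1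
      _ ≤ (1 + ∑ i ∈ Finset.range m0, (minGens k (torusInv k (wBin i)) : ℝ)) * 1 * 1 := by linarith
      _ ≤ _ := by gcongr
end Reduction

/-- Let `T` be the diagonal maximal torus of `SL₂` acting on the space `V_n` of binary
forms of degree `n` over a field of characteristic 0 (the coordinate `a_i` having
`T`-weight `i ∈ {-n, -n+2, …, n}`).  Then the cardinality of a minimal generating set of
`k[V_n]^T` is `O(n·e^{6√n log 2n})` for odd `n` and `O(n·e^{12√(n/2) log n})` for
even `n`. -/
theorem binary_forms_torus_invariants_minGens_bound [IsAlgClosed k] [CharZero k] :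
    (∃ C : ℝ, ∀ n : ℕ, 1 ≤ n → Odd n →
      (minGens k (torusInv k (wBin n)) : ℝ) ≤
        C * n * Real.exp (6 * Real.sqrt n * Real.log (2 * n))) ∧
    (∃ C : ℝ, ∀ n : ℕ, 1 ≤ n → Even n →
      (minGens k (torusInv k (wBin n)) : ℝ) ≤
        C * n * Real.exp (12 * Real.sqrt ((n : ℝ) / 2) * Real.log n)) := by
  obtain ⟨C, hC, h⟩ := final_aux k
  refine ⟨⟨C, fun n hn _ => (h n hn).trans ?_⟩, ⟨C, fun n hn _ => (h n hn).trans ?_⟩⟩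
  · have hn1 : (1 : ℝ) ≤ n := by exact_mod_cast hn
    gcongr
    linarith
  · have hn1 : (1 : ℝ) ≤ n := by exact_mod_cast hn
    have hl : 0 ≤ Real.log n := Real.log_nonneg hn1
    have h6 : 6 * Real.sqrt n ≤ 12 * Real.sqrt ((n : ℝ) / 2) := by
      have : Real.sqrt n ≤ 2 * Real.sqrt ((n : ℝ) / 2) := by
        rw [Real.sqrt_le_left (by positivity), mul_pow, Real.sq_sqrt (by positivity)]
        linarith
      linarith
    gcongr
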